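/- arXiv:2509.00302 — 3 statements merged into one kernel-verified Lean document; each statement's English description precedes it below -/
import Mathlib

section
/- Let Q be a prime power and let b be a divisor of Q+1 with 1 < b < Q+1. Let s be an odd positive integer and q = Q^{2s}. Then for every integer b' with 0 ≤ b' ≤ b−2, setting r = b − b' and δ = Q + 1 − r, and for all integers t, m with 1 ≤ t < m ≤ (q + ((Q+1)/b − 1)(Q−1)Q^{s})/Q, there exists an optimal (r, δ)-LRC over F_q with parameters [mQ, tr+1, (m−t)Q]_q. Moreover, if Q is odd and b = (Q+1)/2, the same conclusion holds for every positive integer s (not necessarily odd). -/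
/-- The Hamming weight of a vector: the number of nonzero coordinates. -/
def hammingWt {F : Type*} [Zero F] [DecidableEq F] {n : ℕ} (v : Fin n → F) : ℕ :=
  (Finset.univ.filter (fun i => v i ≠ 0)).card

/-- The minimum distance of the linear code `C` is at least `d`. -/
def MinDistGe {F : Type*} [Field F] [DecidableEq F] {n : ℕ}
    (C : Submodule F (Fin n → F)) (d : ℕ) : Prop :=
  ∀ c ∈ C, c ≠ 0 → d ≤ hammingWt c

/-- The minimum distance of the linear code `C` is exactly `d`. -/
def MinDistEq {F : Type*} [Field F] [DecidableEq F] {n : ℕ}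
    (C : Submodule F (Fin n → F)) (d : ℕ) : Prop :=
  MinDistGe C d ∧ ∃ c ∈ C, c ≠ 0 ∧ hammingWt c = d

/-- `C` is an `(r, δ)`-locally repairable code: every coordinate `i` has a repair
group `R` containing `i`, of size at most `r + δ - 1`, such that the punctured code
`C|_R` has minimum distance at least `δ` (i.e. every codeword whose restriction to
`R` is nonzero has at least `δ` nonzero coordinates inside `R`). -/
def IsLRC {F : Type*} [Field F] [DecidableEq F] {n : ℕ}
    (C : Submodule F (Fin n → F)) (r δ : ℕ) : Prop :=
  ∀ i : Fin n, ∃ R : Finset (Fin n), i ∈ R ∧ R.card ≤ r + δ - 1 ∧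
    ∀ c ∈ C, (∃ j ∈ R, c j ≠ 0) → δ ≤ (R.filter (fun j => c j ≠ 0)).card

/-- The parameters `[n, k, d]` attain the Singleton-type bound for `(r, δ)`-LRCs:
`d = n - k + 1 - (⌈k/r⌉ - 1)(δ - 1)`  (here `⌈k/r⌉ = (k + r - 1)/r`). -/
def SingletonOptimal (n k d r δ : ℕ) : Prop :=
  (d : ℤ) = (n : ℤ) - (k : ℤ) + 1 - ((((k + r - 1) / r : ℕ) : ℤ) - 1) * ((δ : ℤ) - 1)

/-- There exists an optimal `(r, δ)`-LRC over `F` with parameters `[n, k, d]`. -/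
def ExistsOptimalLRC (F : Type*) [Field F] [DecidableEq F] (n k d r δ : ℕ) : Prop :=
  ∃ C : Submodule F (Fin n → F),
    Module.finrank F C = k ∧ MinDistEq C d ∧ IsLRC C r δ ∧ SingletonOptimal n k d r δ



namespace LRCaux
open Finset

section powers
variable {F : Type*} [Field F] [Fintype F] [DecidableEq F]

lemma card_pow_one (n : ℕ) (hn : n ∣ Fintype.card F - 1) :
    (univ.filter (fun x : F => x ^ n = 1)).card = n := by
  have hq : 0 < Fintype.card F - 1 := by
    have := Fintype.one_lt_card (α := F); omega
  have hn0 : n ≠ 0 := by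
    rintro rfl
    rw [zero_dvd_iff] at hn; omega
  have h := IsCyclic.card_powMonoidHom_ker (G := Fˣ) n
  rw [Nat.card_eq_fintype_card (α := Fˣ), Fintype.card_units, Nat.gcd_eq_right hn] at h
  refine Eq.trans ?_ h
  rw [Nat.card_eq_fintype_card, ← Fintype.card_coe]
  symm
  refine Fintype.card_congr ⟨fun u => ⟨((u : Fˣ) : F), ?_⟩, fun x => ⟨Units.mk0 x.1 ?_, ?_⟩, ?_, ?_⟩
  · have := u.2
    rw [MonoidHom.mem_ker, powMonoidHom_apply] at this
    simp only [mem_filter, mem_univ, true_and]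
    rw [← Units.val_pow_eq_pow_val, this, Units.val_one]
  · have := x.2
    simp only [mem_filter, mem_univ, true_and] at this
    intro h0
    rw [h0, zero_pow hn0] at this
    exact zero_ne_one this
  · have := x.2
    simp only [mem_filter, mem_univ, true_and] at this
    rw [MonoidHom.mem_ker, powMonoidHom_apply]
    ext
    simpa using this
  · intro u; ext; simp
  · intro x; ext; simp

lemma exists_root (n k : ℕ) (hn : n * k = Fintype.card F - 1) (z : F)
    (h : z ^ k = 1) : ∃ w, w ^ n = z := by
  have hq : 0 < Fintype.card F - 1 := by
    have := Fintype.one_lt_card (α := F); omega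
  have hk0 : k ≠ 0 := by rintro rfl; simp at hn; omega
  have hz : z ≠ 0 := by
    rintro rfl
    rw [zero_pow hk0] at h; exact zero_ne_one h
  obtain ⟨g, hg⟩ := IsCyclic.exists_generator (α := Fˣ)
  obtain ⟨j, hj⟩ := Subgroup.mem_zpowers_iff.1 (hg (Units.mk0 z hz))
  have ho : orderOf g = n * k := by
    rw [orderOf_eq_card_of_forall_mem_zpowers hg, Nat.card_eq_fintype_card, Fintype.card_units, hn]
  have h1 : g ^ (j * (k : ℤ)) = 1 := by
    rw [zpow_mul, hj, zpow_natCast]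
    ext; simpa using h
  rw [← orderOf_dvd_iff_zpow_eq_one, ho, Nat.cast_mul] at h1
  have h2 : (n : ℤ) ∣ j := Int.dvd_of_mul_dvd_mul_right (by exact_mod_cast hk0) h1
  obtain ⟨l, rfl⟩ := h2
  refine ⟨((g ^ l : Fˣ) : F), ?_⟩
  rw [← Units.val_pow_eq_pow_val, ← zpow_natCast, ← zpow_mul, mul_comm l, hj, Units.val_mk0]

lemma card_pow_self (n : ℕ) (hn1 : 1 < n) (hn : n - 1 ∣ Fintype.card F - 1) :
    (univ.filter (fun x : F => x ^ n = x)).card = n := by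
  have : (univ.filter (fun x : F => x ^ n = x)) =
      insert 0 (univ.filter (fun x : F => x ^ (n - 1) = 1)) := by
    ext x
    simp only [mem_filter, mem_univ, true_and, mem_insert]
    obtain ⟨k, rfl⟩ : ∃ k, n = k + 1 := ⟨n - 1, by omega⟩
    simp only [Nat.add_sub_cancel, pow_succ]
    constructor
    · intro h
      by_cases h0 : x = 0
      · exact Or.inl h0
      · right
        exact mul_right_cancel₀ h0 (by rw [h, one_mul])
    · rintro (h | h)
      · simp [h]
      · rw [h, one_mul]
  rw [this, card_insert_of_notMem, card_pow_one _ hn]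
  · omega
  · simp only [mem_filter, mem_univ, true_and]
    rw [zero_pow (by omega)]
    exact zero_ne_one

end powers
end LRCaux


namespace LRCaux
open Finset
set_option linter.unusedSectionVars false

structure Setup (F : Type*) [Field F] [Fintype F] (Q s : ℕ) : Prop where
  hQ : 1 < Q
  hs : 0 < s
  hF : Fintype.card F = Q ^ (2 * s)
  hadd : ∀ x y : F, (x + y) ^ Q = x ^ Q + y ^ Q

namespace Setup
variable {F : Type*} [Field F] [Fintype F] [DecidableEq F] {Q s : ℕ}

lemma neg_pow (H : Setup F Q s) (x : F) : (-x) ^ Q = -(x ^ Q) := by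
  have h := H.hadd x (-x)
  have hQ := H.hQ
  rw [add_neg_cancel, zero_pow (by omega)] at h
  exact (neg_eq_of_add_eq_zero_right h.symm).symm

lemma frob_inj (H : Setup F Q s) : Function.Injective (fun x : F => x ^ Q) := by
  intro x y h
  have hQ := H.hQ
  have h1 : (x + -y) ^ Q = 0 := by
    rw [H.hadd, H.neg_pow]
    simp only at h
    rw [h, add_neg_cancel]
  have := eq_zero_of_pow_eq_zero h1
  exact sub_eq_zero.1 (by rw [sub_eq_add_neg, this])

lemma frob_surj (H : Setup F Q s) (x : F) : ∃ y : F, y ^ Q = x :=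
  (Finite.injective_iff_surjective.1 H.frob_inj) x

lemma dvd2 (H : Setup F Q s) : Q ^ 2 - 1 ∣ Fintype.card F - 1 := by
  rw [H.hF, pow_mul]
  simpa using Nat.sub_dvd_pow_sub_pow (Q ^ 2) 1 s

lemma fac (H : Setup F Q s) : (Q + 1) * (Q - 1) = Q ^ 2 - 1 := by
  have hQ := H.hQ
  obtain ⟨k, rfl⟩ : ∃ k, Q = k + 1 := ⟨Q - 1, by omega⟩
  rw [Nat.add_sub_cancel]
  symm; apply Nat.sub_eq_of_eq_add; ring

lemma dvdm (H : Setup F Q s) : Q - 1 ∣ Fintype.card F - 1 :=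
  (Dvd.intro_left _ H.fac).trans H.dvd2

lemma dvdp (H : Setup F Q s) : Q + 1 ∣ Fintype.card F - 1 :=
  (Dvd.intro _ H.fac).trans H.dvd2

lemma cardFQ (H : Setup F Q s) : (univ.filter (fun x : F => x ^ Q = x)).card = Q :=
  card_pow_self Q H.hQ H.dvdm

lemma cardFQ2 (H : Setup F Q s) : (univ.filter (fun x : F => x ^ (Q ^ 2) = x)).card = Q ^ 2 :=
  card_pow_self (Q ^ 2) (Nat.one_lt_pow (by norm_num) H.hQ) H.dvd2

lemma lt_sq (H : Setup F Q s) : Q < Q ^ 2 := by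
  have := H.hQ; nlinarith

lemma norm_surj (H : Setup F Q s) (z : F) (hz : z ^ Q = z) : ∃ w : F, w ^ (Q + 1) = z := by
  by_cases h0 : z = 0
  · exact ⟨0, by simp [h0]⟩
  obtain ⟨l, hl⟩ := H.dvd2
  refine exists_root (Q + 1) ((Q - 1) * l) (by rw [hl, ← H.fac]; ring) z ?_
  have hQ := H.hQ
  have h1 : z ^ (Q - 1) = 1 := by
    apply mul_right_cancel₀ h0
    rw [← pow_succ, one_mul, Nat.sub_add_cancel (by omega), hz]
  rw [pow_mul, h1, one_pow]

lemma exists_eps (H : Setup F Q s) : ∃ e : F, e ≠ 0 ∧ e ^ Q = -e := by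
  have : ∃ x ∈ (univ.filter (fun x : F => x ^ (Q ^ 2) = x)),
      x ∉ (univ.filter (fun x : F => x ^ Q = x)) := by
    apply exists_mem_notMem_of_card_lt_card
    rw [H.cardFQ, H.cardFQ2]; exact H.lt_sq
  obtain ⟨θ, h1, h2⟩ := this
  simp only [mem_filter, mem_univ, true_and] at h1 h2
  refine ⟨θ ^ Q + -θ, fun h => h2 ?_, ?_⟩
  · exact sub_eq_zero.1 (by rw [sub_eq_add_neg, h])
  · rw [H.hadd, H.neg_pow, ← pow_mul, ← pow_two, h1]; ring

lemma card_ker (H : Setup F Q s) : (univ.filter (fun y : F => y ^ Q + y = 0)).card = Q := by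
  obtain ⟨e, he, heQ⟩ := H.exists_eps
  refine Eq.trans ?_ H.cardFQ
  symm
  apply card_bij (fun x _ => e * x)
  · intro x hx
    simp only [mem_filter, mem_univ, true_and] at hx ⊢
    rw [mul_pow, hx, heQ]; ring
  · intro x _ y _ h
    exact mul_left_cancel₀ he h
  · intro y hy
    simp only [mem_filter, mem_univ, true_and] at hy ⊢
    refine ⟨y / e, ?_, by field_simp⟩
    rw [div_pow, heQ, eq_neg_of_add_eq_zero_left hy, neg_div_neg_eq]

lemma card_fib (H : Setup F Q s) (z : F) (hz : ∃ y : F, y ^ Q + y = z) :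
    (univ.filter (fun y : F => y ^ Q + y = z)).card = Q := by
  obtain ⟨y0, rfl⟩ := hz
  refine Eq.trans ?_ H.card_ker
  symm
  apply card_bij (fun x _ => x + y0)
  · intro x hx
    simp only [mem_filter, mem_univ, true_and] at hx ⊢
    rw [H.hadd]; linear_combination hx
  · intro x _ y _ h
    exact add_right_cancel h
  · intro y hy
    simp only [mem_filter, mem_univ, true_and] at hy ⊢
    refine ⟨y + -y0, ?_, by ring⟩
    rw [H.hadd, H.neg_pow]; linear_combination hy

lemma tr_surj (H : Setup F Q s) (z : F) (hz : z ^ Q = z) : ∃ y : F, y ^ Q + y = z := by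
  have : ∃ x ∈ (univ.filter (fun x : F => x ^ (Q ^ 2) = x)),
      x ∉ (univ.filter (fun x : F => x ^ Q + x = 0)) := by
    apply exists_mem_notMem_of_card_lt_card
    rw [H.card_ker, H.cardFQ2]; exact H.lt_sq
  obtain ⟨θ, h1, h2⟩ := this
  simp only [mem_filter, mem_univ, true_and] at h1 h2
  have h3 : (θ ^ Q + θ) ^ Q = θ ^ Q + θ := by
    rw [H.hadd, ← pow_mul, ← pow_two, h1, add_comm]
  refine ⟨θ * z / (θ ^ Q + θ), ?_⟩
  rw [div_pow, mul_pow, h3, hz]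
  field_simp

lemma exists_char (H : Setup F Q s) :
    ∃ ψ : AddChar F ℂ, ψ ≠ 1 ∧ ∀ y : F, ψ (y ^ Q + y) = 1 := by
  let T : F →+ F :=
    { toFun := fun y => y ^ Q + y
      map_zero' := by have := H.hQ; simp; omega
      map_add' := fun x y => by simp only [H.hadd]; ring }
  have hns : ¬ Function.Surjective T := by
    intro h
    have hi := Finite.injective_iff_surjective.2 h
    obtain ⟨e, he, heQ⟩ := H.exists_eps
    apply he
    apply hi
    change e ^ Q + e = T 0
    rw [map_zero, heQ, neg_add_cancel]
  simp only [Function.Surjective, not_forall] at hns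
  obtain ⟨z, hz⟩ := hns
  have hz' : (QuotientAddGroup.mk z : F ⧸ T.range) ≠ 0 := by
    rw [Ne, QuotientAddGroup.eq_zero_iff]
    exact hz
  obtain ⟨χ, hχ⟩ := AddChar.exists_apply_ne_zero.2 hz'
  refine ⟨χ.compAddMonoidHom (QuotientAddGroup.mk' T.range), ?_, ?_⟩
  · intro h
    apply hχ
    have := DFunLike.congr_fun h z
    simpa using this
  · intro y
    have : (QuotientAddGroup.mk (y ^ Q + y) : F ⧸ T.range) = 0 := by
      rw [QuotientAddGroup.eq_zero_iff]; exact ⟨y, rfl⟩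
    rw [AddChar.compAddMonoidHom_apply, QuotientAddGroup.mk'_apply, this, AddChar.map_zero_eq_one]

end Setup
end LRCaux


namespace LRCaux
open Finset
set_option linter.unusedSectionVars false

namespace Setup
variable {F : Type*} [Field F] [Fintype F] [DecidableEq F] {Q s : ℕ}

noncomputable def G (ψ : AddChar F ℂ) (a : ℕ) (c : F) : ℂ := ∑ x : F, ψ (c * x ^ a)

lemma sum_mul {ψ : AddChar F ℂ} (hψ1 : ψ ≠ 1) (u : F) :
    ∑ y : F, ψ (u * y) = if u = 0 then (Fintype.card F : ℂ) else 0 := by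
  have := AddChar.sum_mulShift u (AddChar.IsPrimitive.of_ne_one hψ1)
  simp only [mul_comm u]
  rw [this]; split_ifs <;> simp

lemma psi_frob {ψ : AddChar F ℂ} (hψ : ∀ y : F, ψ (y ^ Q + y) = 1) (y : F) :
    ψ (y ^ Q) = ψ (-y) := by
  have h := hψ y
  rw [show y ^ Q = (y ^ Q + y) + -y by ring, AddChar.map_add_eq_mul, h, one_mul]

lemma sum_frob (H : Setup F Q s) {ψ : AddChar F ℂ} (hψ1 : ψ ≠ 1)
    (hψ : ∀ y : F, ψ (y ^ Q + y) = 1) (v u : F) :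
    ∑ y : F, ψ (v * y ^ Q + u * y) = if v = u ^ Q then (Fintype.card F : ℂ) else 0 := by
  obtain ⟨w, rfl⟩ := H.frob_surj v
  have h1 : ∀ y : F, ψ (w ^ Q * y ^ Q + u * y) = ψ ((u - w) * y) := by
    intro y
    rw [AddChar.map_add_eq_mul, ← mul_pow, psi_frob hψ, ← AddChar.map_add_eq_mul]
    congr 1; ring
  simp only [h1]
  rw [sum_mul hψ1]
  have : (u - w = 0) ↔ w ^ Q = u ^ Q := by
    rw [sub_eq_zero]
    exact ⟨fun h => by rw [h], fun h => (H.frob_inj h).symm⟩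
  simp only [this]

lemma psi_FQ (H : Setup F Q s) {ψ : AddChar F ℂ}
    (hψ : ∀ y : F, ψ (y ^ Q + y) = 1) (z : F) (hz : z ^ Q = z) : ψ z = 1 := by
  obtain ⟨y, rfl⟩ := H.tr_surj z hz
  exact hψ y

lemma G_mul (ψ : AddChar F ℂ) (a : ℕ) (c w : F) (hw : w ≠ 0) : G ψ a (c * w ^ a) = G ψ a c := by
  unfold G
  apply Fintype.sum_bijective (fun x => w * x) (mulLeft_bijective₀ w hw)
  intro x
  rw [mul_pow]; congr 1; ring

lemma G_FQ (H : Setup F Q s) (ψ : AddChar F ℂ) (a b : ℕ) (hab : a * b = Q + 1) (c u : F)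
    (hu : u ≠ 0) (huQ : u ^ Q = u) : G ψ a (u * c) = G ψ a c := by
  obtain ⟨w, rfl⟩ := H.norm_surj u huQ
  have hw : w ≠ 0 := by rintro rfl; simp at hu
  rw [← hab, mul_comm a b, pow_mul, mul_comm, G_mul]
  exact pow_ne_zero _ hw

lemma G_zero (ψ : AddChar F ℂ) (a : ℕ) : G ψ a 0 = Fintype.card F := by
  simp [G]

lemma points (H : Setup F Q s) {ψ : AddChar F ℂ} (hψ1 : ψ ≠ 1)
    (hψ : ∀ y : F, ψ (y ^ Q + y) = 1) (a b : ℕ) (hab : a * b = Q + 1) (c : F) :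
    (Q : ℂ) * (univ.filter (fun x : F => ∃ y : F, y ^ Q + y = c * x ^ a)).card =
      Fintype.card F + ((Q : ℂ) - 1) * G ψ a c := by
  have hq : (Fintype.card F : ℂ) ≠ 0 := by simp
  apply mul_left_cancel₀ hq
  have e1 : (Q : ℂ) * (univ.filter (fun x : F => ∃ y : F, y ^ Q + y = c * x ^ a)).card =
      ∑ x : F, ∑ y : F, if c * x ^ a - (y ^ Q + y) = 0 then (1 : ℂ) else 0 := by
    rw [mul_comm, ← nsmul_eq_mul, ← sum_const, sum_filter]
    apply sum_congr rfl
    intro x _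
    rw [sum_boole]
    have e : (univ.filter (fun y : F => c * x ^ a - (y ^ Q + y) = 0)) =
        univ.filter (fun y : F => y ^ Q + y = c * x ^ a) := by
      ext y; simp [sub_eq_zero, eq_comm]
    rw [e]
    split_ifs with h
    · rw [H.card_fib _ h]
    · rw [filter_eq_empty_iff.2]
      · simp
      · intro y _ hy
        exact h ⟨y, hy⟩
  have e2 : ∀ x y : F, (Fintype.card F : ℂ) * (if c * x ^ a - (y ^ Q + y) = 0 then (1 : ℂ) else 0) =
      ∑ u : F, ψ (u * c * x ^ a) * ψ ((-u) * y ^ Q + (-u) * y) := by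
    intro x y
    rw [mul_ite, mul_one, mul_zero, ← sum_mul hψ1]
    apply sum_congr rfl
    intro u _
    rw [← AddChar.map_add_eq_mul]; congr 1; ring
  have e3 : ∀ x : F, ∑ y : F, ∑ u : F, ψ (u * c * x ^ a) * ψ ((-u) * y ^ Q + (-u) * y) =
      ∑ u : F, ψ (u * c * x ^ a) * (if u ^ Q = u then (Fintype.card F : ℂ) else 0) := by
    intro x
    rw [sum_comm]
    apply sum_congr rfl
    intro u _
    rw [← mul_sum, H.sum_frob hψ1 hψ]
    congr 2
    rw [H.neg_pow, neg_inj]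
    exact propext eq_comm
  rw [e1, mul_sum]
  simp only [mul_sum, e2, e3]
  rw [sum_comm]
  have e4 : ∀ u : F, ∑ x : F, ψ (u * c * x ^ a) * (if u ^ Q = u then (Fintype.card F : ℂ) else 0) =
      if u ^ Q = u then (Fintype.card F : ℂ) *
        (G ψ a c + if u = 0 then (Fintype.card F : ℂ) - G ψ a c else 0) else 0 := by
    intro u
    rw [← Finset.sum_mul]
    change G ψ a (u * c) * _ = _
    split_ifs with h1 h2
    · rw [h2, zero_mul, G_zero]; ring
    · rw [H.G_FQ ψ a b hab c u h2 h1]; ring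
    · simp
  simp only [e4]
  have hQ := H.hQ
  rw [← sum_filter, ← mul_sum, sum_add_distrib, sum_const, H.cardFQ, sum_ite_eq',
    if_pos (by simp; omega), nsmul_eq_mul]
  ring

lemma conj_G (H : Setup F Q s) (ψ : AddChar F ℂ) (c : F) :
    (starRingEnd ℂ) (G ψ (Q + 1) c) = G ψ (Q + 1) c := by
  have h1 : (-1 : F) ^ Q = -1 := by rw [H.neg_pow, one_pow]
  rw [← H.G_FQ ψ (Q + 1) 1 (by ring) c (-1) (by simp) h1]
  conv_lhs => rw [H.G_FQ ψ (Q + 1) 1 (by ring) c (-1) (by simp) h1]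
  unfold G
  rw [map_sum]
  apply sum_congr rfl
  intro x _
  rw [← AddChar.map_neg_eq_conj]
  congr 1; ring

lemma G_sq (H : Setup F Q s) {ψ : AddChar F ℂ} (hψ1 : ψ ≠ 1)
    (hψ : ∀ y : F, ψ (y ^ Q + y) = 1) (c : F) :
    G ψ (Q + 1) c ^ 2 = Fintype.card F *
      (univ.filter (fun h : F => c * h = (c * h ^ Q) ^ Q)).card := by
  rw [pow_two]
  have e0 : G ψ (Q + 1) c * G ψ (Q + 1) c =
      (starRingEnd ℂ) (G ψ (Q + 1) c) * G ψ (Q + 1) c := by rw [H.conj_G ψ c]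
  rw [e0]
  unfold G
  rw [map_sum, sum_mul_sum]
  have e1 : ∀ y : F, ∑ x : F, (starRingEnd ℂ) (ψ (c * y ^ (Q + 1))) * ψ (c * x ^ (Q + 1)) =
      ∑ h : F, ψ (c * h ^ (Q + 1)) * ψ ((c * h) * y ^ Q + (c * h ^ Q) * y) := by
    intro y
    symm
    apply Fintype.sum_bijective (fun h => h + y) (AddGroup.addRight_bijective y)
    intro h
    rw [← AddChar.map_neg_eq_conj, ← AddChar.map_add_eq_mul, ← AddChar.map_add_eq_mul]
    congr 1
    rw [pow_succ (h + y), H.hadd]; ring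
  refine (sum_congr rfl (fun y _ => e1 y)).trans ?_
  rw [sum_comm]
  have e3 : ∀ h : F, ∑ y : F, ψ (c * h ^ (Q + 1)) * ψ ((c * h) * y ^ Q + (c * h ^ Q) * y) = _ :=
    fun h => by rw [← mul_sum, H.sum_frob hψ1 hψ]
  rw [sum_congr rfl (fun h _ => e3 h)]
  have e2 : ∀ h : F, ψ (c * h ^ (Q + 1)) *
      (if c * h = (c * h ^ Q) ^ Q then (Fintype.card F : ℂ) else 0) =
      if c * h = (c * h ^ Q) ^ Q then (Fintype.card F : ℂ) else 0 := by
    intro h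
    split_ifs with h1
    · rw [H.psi_FQ hψ, one_mul]
      rw [pow_succ, ← mul_assoc, mul_pow, ← h1]; ring
    · simp
  simp only [e2]
  rw [← sum_filter, sum_const, nsmul_eq_mul, mul_comm]

lemma G_sq_one (H : Setup F Q s) {ψ : AddChar F ℂ} (hψ1 : ψ ≠ 1)
    (hψ : ∀ y : F, ψ (y ^ Q + y) = 1) :
    G ψ (Q + 1) 1 ^ 2 = Fintype.card F * (Q : ℂ) ^ 2 := by
  rw [H.G_sq hψ1 hψ]
  have : (univ.filter (fun h : F => 1 * h = (1 * h ^ Q) ^ Q)) =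
      univ.filter (fun h : F => h ^ (Q ^ 2) = h) := by
    ext h
    simp only [one_mul, ← pow_mul, ← pow_two, mem_filter, mem_univ, true_and, eq_comm]
  rw [this, H.cardFQ2]; push_cast; rfl

lemma G_sq_other (H : Setup F Q s) {ψ : AddChar F ℂ} (hψ1 : ψ ≠ 1)
    (hψ : ∀ y : F, ψ (y ^ Q + y) = 1) (c : F) (hc0 : c ≠ 0) (hc : ∀ w : F, w ^ (Q + 1) ≠ c) :
    G ψ (Q + 1) c ^ 2 = Fintype.card F := by
  rw [H.G_sq hψ1 hψ]
  have hQ := H.hQ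
  have : (univ.filter (fun h : F => c * h = (c * h ^ Q) ^ Q)) = {0} := by
    ext h
    simp only [mem_filter, mem_univ, true_and, mem_singleton]
    constructor
    · intro h1
      by_contra h0
      obtain ⟨w, hw⟩ := H.norm_surj (c * h ^ (Q + 1)) (by
        rw [pow_succ, ← mul_assoc, mul_pow, ← h1]; ring)
      apply hc (w / h)
      rw [div_pow, hw]; field_simp
    · rintro rfl
      simp [zero_pow (show Q ≠ 0 by omega)]
  rw [this]; simp

lemma G_sum (ψ : AddChar F ℂ) (hψ1 : ψ ≠ 1) (a : ℕ) (ha : a ≠ 0) :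
    ∑ c ∈ univ.erase (0 : F), G ψ a c = 0 := by
  have h1 : ∑ c : F, G ψ a c = Fintype.card F := by
    unfold G
    rw [sum_comm]
    have : ∀ x : F, ∑ c : F, ψ (c * x ^ a) = if x = 0 then (Fintype.card F : ℂ) else 0 := by
      intro x
      have := sum_mul hψ1 (x ^ a)
      simp only [mul_comm (x ^ a)] at this
      rw [this]
      simp [pow_eq_zero_iff ha]
    simp only [this]
    simp
  rw [← Finset.add_sum_erase _ _ (mem_univ (0 : F)), G_zero] at h1
  linear_combination h1

lemma G_rel (ψ : AddChar F ℂ) (a b : ℕ) (hab : a * b ≠ 0) (c : F) :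
    ((Fintype.card F : ℂ) - 1) * G ψ a c = ∑ u ∈ univ.erase (0 : F), G ψ (a * b) (c * u ^ a) := by
  have hb : b ≠ 0 := by rintro rfl; simp at hab
  have ha : a ≠ 0 := by rintro rfl; simp at hab
  unfold G
  conv_rhs => rw [sum_comm, ← Finset.add_sum_erase _ _ (mem_univ (0 : F))]
  have h1 : ∀ x ∈ univ.erase (0 : F), ∑ u ∈ univ.erase (0 : F), ψ (c * u ^ a * x ^ (a * b)) =
      G ψ a c - 1 := by
    intro x hx
    have hx0 : x ≠ 0 := (mem_erase.1 hx).1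
    have : ∑ u : F, ψ (c * u ^ a * x ^ (a * b)) = G ψ a c := by
      rw [← G_mul ψ a c (x ^ b) (pow_ne_zero _ hx0)]
      unfold G
      apply sum_congr rfl
      intro u _
      congr 1
      rw [mul_comm a b, pow_mul]; ring
    rw [← this, ← Finset.add_sum_erase _ _ (mem_univ (0 : F))]
    simp [zero_pow ha]
  rw [sum_congr rfl h1]
  simp only [zero_pow hab, mul_zero, AddChar.map_zero_eq_one, sum_const, card_erase_of_mem (mem_univ _),
    card_univ, nsmul_eq_mul, mul_one]
  have : 1 ≤ Fintype.card F := Fintype.card_pos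
  rw [Nat.cast_sub this]
  unfold G
  push_cast; ring

lemma sign_div (H : Setup F Q s) : ∃ M : ℕ,
    (univ.filter (fun x : F => ∃ y : F, y ^ Q + y = 1 * x ^ (Q + 1))).card = 1 + (Q ^ 2 - 1) * M := by
  have hQ := H.hQ
  set N := (univ.filter (fun x : F => ∃ y : F, y ^ Q + y = 1 * x ^ (Q + 1))) with hN
  have h0 : (0 : F) ∈ N := by
    simp only [hN, mem_filter, mem_univ, true_and]
    exact ⟨0, by simp [zero_pow (show Q ≠ 0 by omega)]⟩
  rw [← Finset.card_erase_add_one h0]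
  suffices h : (Q ^ 2 - 1) ∣ (N.erase 0).card by
    obtain ⟨M, hM⟩ := h
    exact ⟨M, by rw [hM, add_comm]⟩
  rw [card_eq_sum_card_image (fun x => x ^ (Q ^ 2 - 1))]
  apply dvd_sum
  intro z hz
  obtain ⟨x0, hx0, rfl⟩ := mem_image.1 hz
  have hx00 : x0 ≠ 0 := (mem_erase.1 hx0).1
  apply dvd_of_eq
  refine (card_pow_one (F := F) _ H.dvd2).symm.trans ?_
  apply card_bij (fun μ _ => μ * x0)
  · intro μ hμ
    simp only [mem_filter, mem_univ, true_and] at hμ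
    have hμ0 : μ ≠ 0 := by
      rintro rfl
      rw [zero_pow (by have := H.lt_sq; omega)] at hμ
      exact zero_ne_one hμ
    obtain ⟨y, hy⟩ := (mem_filter.1 (mem_erase.1 hx0).2).2
    simp only [mem_filter, mem_erase, hN, mem_univ, true_and]
    refine ⟨⟨mul_ne_zero hμ0 hx00, μ ^ (Q + 1) * y, ?_⟩, ?_⟩
    · have : (μ ^ (Q + 1)) ^ Q = μ ^ (Q + 1) := by
        obtain ⟨k, rfl⟩ : ∃ k, Q = k + 1 := ⟨Q - 1, by omega⟩
        rw [pow_succ _ k, ← pow_mul]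
        have := H.fac
        rw [Nat.add_sub_cancel] at this
        rw [this, hμ, one_mul]
      rw [mul_pow, this, mul_pow]
      linear_combination μ ^ (Q + 1) * hy
    · rw [mul_pow, hμ, one_mul]
  · intro x _ y _ h
    exact mul_right_cancel₀ hx00 h
  · intro x hx
    simp only [mem_filter, mem_univ, true_and] at hx ⊢
    refine ⟨x / x0, ?_, by field_simp⟩
    rw [div_pow, hx.2, div_self (pow_ne_zero _ hx00)]

end Setup
end LRCaux


namespace LRCaux
open Finset
set_option linter.unusedSectionVars false

namespace Setup
variable {F : Type*} [Field F] [Fintype F] [DecidableEq F] {Q s : ℕ}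

lemma card_pow_filter (n k : ℕ) (hk : n * k = Fintype.card F - 1) :
    ((univ.erase (0 : F)).filter (fun c => c ^ k = 1)).card = k := by
  have hq : 0 < Fintype.card F - 1 := by
    have := Fintype.one_lt_card (α := F); omega
  have hk0 : k ≠ 0 := by rintro rfl; simp at hk; omega
  refine Eq.trans ?_ (card_pow_one (F := F) k (Dvd.intro_left _ hk))
  congr 1
  ext c
  simp only [mem_filter, mem_erase, mem_univ, true_and, and_true, and_iff_right_iff_imp]
  rintro h rfl
  rw [zero_pow hk0] at h
  exact zero_ne_one h

lemma pow_card_sub (n k : ℕ) (hk : n * k = Fintype.card F - 1) (w : F) (hw : w ≠ 0) :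
    (w ^ n) ^ k = 1 := by
  rw [← pow_mul, hk, FiniteField.pow_card_sub_one_eq_one w hw]

lemma G_D (_H : Setup F Q s) (ψ : AddChar F ℂ) (k : ℕ) (hk : (Q + 1) * k = Fintype.card F - 1)
    (c : F) (hc0 : c ≠ 0) (hc : c ^ k = 1) : G ψ (Q + 1) c = G ψ (Q + 1) 1 := by
  obtain ⟨w, rfl⟩ := exists_root (Q + 1) k hk c hc
  have hw : w ≠ 0 := by rintro rfl; simp at hc0
  have := G_mul ψ (Q + 1) 1 w hw
  rwa [one_mul] at this

lemma card_cast (H : Setup F Q s) : (Fintype.card F : ℝ) = ((Q : ℝ) ^ s) ^ 2 := by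
  rw [H.hF]; push_cast; rw [← pow_mul, mul_comm]

lemma G_other (H : Setup F Q s) {ψ : AddChar F ℂ} (hψ1 : ψ ≠ 1)
    (hψ : ∀ y : F, ψ (y ^ Q + y) = 1) (σ : ℝ) (hσ : σ ^ 2 = 1)
    (h1 : G ψ (Q + 1) 1 = ((σ * (Q : ℝ) ^ (s + 1) : ℝ) : ℂ)) (k : ℕ)
    (hk : (Q + 1) * k = Fintype.card F - 1) (c : F) (hc0 : c ≠ 0) (hc : c ^ k ≠ 1) :
    G ψ (Q + 1) c = ((-σ * (Q : ℝ) ^ s : ℝ) : ℂ) := by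
  have hR : ∀ c, G ψ (Q + 1) c = (((G ψ (Q + 1) c).re : ℝ) : ℂ) := fun c =>
    (Complex.conj_eq_iff_re.1 (H.conj_G ψ c)).symm
  set R : F → ℝ := fun c => (G ψ (Q + 1) c).re with hRdef
  have hR' : ∀ c, G ψ (Q + 1) c = ((R c : ℝ) : ℂ) := hR
  have hR1 : R 1 = σ * (Q : ℝ) ^ (s + 1) := by
    rw [hR'] at h1; exact_mod_cast h1
  have hsum : ∑ c ∈ univ.erase (0 : F), R c = 0 := by
    have := G_sum ψ hψ1 (Q + 1) (by omega)
    simp only [hR'] at this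
    exact_mod_cast this
  have hcard := H.card_cast
  set E := (univ.erase (0 : F)).filter (fun c => ¬ c ^ k = 1) with hE
  have hD := card_pow_filter (F := F) (Q + 1) k hk
  have hsplit := sum_filter_add_sum_filter_not (univ.erase (0 : F)) (fun c => c ^ k = 1) R
  rw [hsum] at hsplit
  change _ + ∑ c ∈ E, R c = 0 at hsplit
  have hDs : ∑ c ∈ (univ.erase (0 : F)).filter (fun c => c ^ k = 1), R c = k * R 1 := by
    rw [sum_congr rfl (g := fun _ => R 1), sum_const, hD, nsmul_eq_mul]
    intro c hc
    simp only [mem_filter, mem_erase, mem_univ, and_true] at hc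
    simp only [hRdef]
    rw [H.G_D ψ k hk c hc.1 hc.2]
  have hcE : E.card = Q * k := by
    have := card_filter_add_card_filter_not (s := univ.erase (0 : F)) (fun c => c ^ k = 1)
    rw [hD, card_erase_of_mem (mem_univ _), card_univ, ← hk] at this
    change k + E.card = _ at this
    have e : (Q + 1) * k = Q * k + k := by ring
    rw [e] at this
    omega
  have hsqE : ∀ c ∈ E, R c ^ 2 = ((Q : ℝ) ^ s) ^ 2 := by
    intro c hc
    simp only [hE, mem_filter, mem_erase, mem_univ, and_true] at hc
    have := H.G_sq_other hψ1 hψ c hc.1 (by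
      rintro w rfl
      have hw : w ≠ 0 := by rintro rfl; simp at hc
      exact hc.2 (pow_card_sub _ _ hk w hw))
    rw [hR'] at this
    rw [← hcard]
    exact_mod_cast this
  have hz : ∑ c ∈ E, (R c + σ * (Q : ℝ) ^ s) ^ 2 = 0 := by
    have : ∀ c ∈ E, (R c + σ * (Q : ℝ) ^ s) ^ 2 =
        2 * ((Q : ℝ) ^ s) ^ 2 + 2 * σ * (Q : ℝ) ^ s * R c := by
      intro c hc
      linear_combination hsqE c hc + ((Q : ℝ) ^ s) ^ 2 * hσ
    rw [sum_congr rfl this, sum_add_distrib, sum_const, ← mul_sum, hcE, nsmul_eq_mul]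
    rw [hDs, hR1] at hsplit
    push_cast
    rw [pow_succ] at hsplit
    linear_combination 2 * σ * (Q : ℝ) ^ s * hsplit - 2 * k * Q * ((Q : ℝ) ^ s) ^ 2 * hσ
  rw [sum_eq_zero_iff_of_nonneg (fun _ _ => sq_nonneg _)] at hz
  have := hz c (by simp [hE, hc0, hc])
  have h3 := pow_eq_zero_iff (two_ne_zero) |>.1 this
  rw [hR']
  congr 1
  linarith

lemma sign_arith (Q s M : ℕ) (hQ : 1 < Q) (hs : 0 < s) (σ : ℤ) (hσ : σ = 1 ∨ σ = -1)
    (h : (Q : ℤ) * (1 + ((Q : ℤ) ^ 2 - 1) * M) = (Q : ℤ) ^ (2 * s) + (Q - 1) * (σ * Q ^ (s + 1))) :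
    σ = if Odd s then 1 else -1 := by
  have hQ' : (1 : ℤ) < Q := by exact_mod_cast hQ
  have key : ¬ ((Q : ℤ) ^ 2 - 1 ∣ 2 * ((Q : ℤ) - 1)) := by
    rintro ⟨l, hl⟩
    have h2 : ((Q : ℤ) - 1) * 2 = (Q - 1) * ((Q + 1) * l) := by linear_combination hl
    have h3 := mul_left_cancel₀ (by omega) h2
    rcases le_or_gt l 0 with h | h
    · nlinarith
    · nlinarith
  obtain ⟨n, rfl⟩ : ∃ n, s = n + 1 := ⟨s - 1, by omega⟩
  have h' : 1 + ((Q : ℤ) ^ 2 - 1) * M = (Q : ℤ) * (Q ^ 2) ^ n + (Q - 1) * (σ * Q ^ (n + 1)) := by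
    apply mul_left_cancel₀ (show (Q : ℤ) ≠ 0 by omega)
    rw [h]; ring
  have hm : ∀ j : ℕ, ∃ l : ℤ, ((Q : ℤ) ^ 2) ^ j = 1 + ((Q : ℤ) ^ 2 - 1) * l := by
    intro j
    have := sub_dvd_pow_sub_pow ((Q : ℤ) ^ 2) 1 j
    rw [one_pow] at this
    obtain ⟨l, hl⟩ := this
    exact ⟨l, by linarith⟩
  obtain ⟨l1, hl1⟩ := hm n
  rw [hl1] at h'
  split_ifs with ho
  · rcases hσ with rfl | rfl
    · rfl
    exfalso
    apply key
    obtain ⟨j, hj⟩ := ho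
    obtain ⟨l2, hl2⟩ := hm j
    have e : (Q : ℤ) ^ (n + 1) = Q * (1 + ((Q : ℤ) ^ 2 - 1) * l2) := by
      rw [hj, pow_succ, pow_mul, hl2]; ring
    rw [e] at h'
    refine ⟨M - Q * l1 + (Q - 1) * Q * l2 + 1, ?_⟩
    linear_combination (-1 : ℤ) * h'
  · rcases hσ with rfl | rfl
    · exfalso
      apply key
      rw [Nat.not_odd_iff_even] at ho
      obtain ⟨j, hj⟩ := ho
      obtain ⟨l2, hl2⟩ := hm j
      have e : (Q : ℤ) ^ (n + 1) = 1 + ((Q : ℤ) ^ 2 - 1) * l2 := by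
        rw [hj, ← two_mul, pow_mul, hl2]
      rw [e] at h'
      refine ⟨M - Q * l1 - (Q - 1) * l2, ?_⟩
      linear_combination (-1 : ℤ) * h'
    · rfl

lemma G_one (H : Setup F Q s) {ψ : AddChar F ℂ} (hψ1 : ψ ≠ 1)
    (hψ : ∀ y : F, ψ (y ^ Q + y) = 1) :
    G ψ (Q + 1) 1 = (((if Odd s then 1 else -1 : ℝ) * (Q : ℝ) ^ (s + 1) : ℝ) : ℂ) := by
  have h1 := H.G_sq_one hψ1 hψ
  have h2 : G ψ (Q + 1) 1 ^ 2 = ((Q : ℂ) ^ (s + 1)) ^ 2 := by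
    rw [h1, H.hF]; push_cast; ring
  have h3 := H.points hψ1 hψ (Q + 1) 1 (by ring) 1
  obtain ⟨M, hM⟩ := H.sign_div
  have hQ := H.hQ
  have hQ2 := H.lt_sq
  rw [hM, H.hF] at h3
  have : ∃ σ : ℤ, (σ = 1 ∨ σ = -1) ∧ G ψ (Q + 1) 1 = (σ : ℂ) * (Q : ℂ) ^ (s + 1) := by
    rcases sq_eq_sq_iff_eq_or_eq_neg.1 h2 with h | h
    · exact ⟨1, Or.inl rfl, by rw [h]; simp⟩
    · exact ⟨-1, Or.inr rfl, by rw [h]; simp⟩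
  obtain ⟨σ, hσ, hG⟩ := this
  rw [hG] at h3
  have h4 : (Q : ℤ) * (1 + ((Q : ℤ) ^ 2 - 1) * M) =
      (Q : ℤ) ^ (2 * s) + (Q - 1) * (σ * Q ^ (s + 1)) := by
    push_cast [Nat.cast_sub (show 1 ≤ Q ^ 2 by omega)] at h3
    exact_mod_cast h3
  have := sign_arith Q s M hQ H.hs σ hσ h4
  rw [hG, this]
  split_ifs <;> simp

/-- main count, first case -/
lemma count_odd (H : Setup F Q s) (a b : ℕ) (hab : a * b = Q + 1) (hs : Odd s) :
    (Q : ℝ) * (univ.filter (fun x : F => ∃ y : F, y ^ Q + y = 1 * x ^ a)).card =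
      (Q : ℝ) ^ (2 * s) + ((Q : ℝ) - 1) * (((a : ℝ) - 1) * (Q : ℝ) ^ s) := by
  obtain ⟨ψ, hψ1, hψ⟩ := H.exists_char
  have h1 := H.G_one hψ1 hψ
  rw [if_pos hs] at h1
  obtain ⟨k, hk⟩ := H.dvdp
  have hk' := hk.symm
  have hoth := H.G_other hψ1 hψ 1 (by norm_num) h1 k hk'
  have hrel := G_rel ψ a b (by omega) (1 : F)
  have hq1 : 1 < Fintype.card F := Fintype.one_lt_card
  have hkb : b * (a * k) = Fintype.card F - 1 := by rw [hk, ← hab]; ring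
  have hcd := card_pow_filter (F := F) b (a * k) hkb
  have hterm : ∀ u ∈ univ.erase (0 : F), G ψ (a * b) (1 * u ^ a) =
      ((-(Q : ℝ) ^ s : ℝ) : ℂ) + if u ^ (a * k) = 1 then (((Q : ℝ) ^ (s + 1) + (Q : ℝ) ^ s : ℝ) : ℂ) else 0 := by
    intro u hu
    have hu0 := (mem_erase.1 hu).1
    rw [hab, one_mul]
    split_ifs with h
    · rw [H.G_D ψ k hk' _ (pow_ne_zero _ hu0) (by rw [← pow_mul]; exact h), h1]
      push_cast; ring
    · rw [hoth _ (pow_ne_zero _ hu0) (by rw [← pow_mul]; exact h)]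
      push_cast; ring
  rw [sum_congr rfl hterm, sum_add_distrib, ← sum_filter, sum_const, sum_const, hcd,
    card_erase_of_mem (mem_univ _), card_univ] at hrel
  have hG : G ψ a (1 : F) = ((((a : ℝ) - 1) * (Q : ℝ) ^ s : ℝ) : ℂ) := by
    have hne : (Fintype.card F : ℂ) - 1 ≠ 0 := by
      rw [sub_ne_zero]; exact_mod_cast hq1.ne'
    apply mul_left_cancel₀ hne
    rw [hrel]
    have e1 : ((Fintype.card F - 1 : ℕ) : ℂ) = (Fintype.card F : ℂ) - 1 := by
      push_cast [Nat.cast_sub hq1.le]; rfl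
    have e2 : (Fintype.card F : ℂ) - 1 = ((Q : ℂ) + 1) * k := by
      rw [← e1, hk]; push_cast; ring
    rw [nsmul_eq_mul, nsmul_eq_mul, e1, e2]
    push_cast; ring
  have hp := H.points hψ1 hψ a b hab 1
  rw [hG, H.hF] at hp
  exact_mod_cast hp

/-- main count, second case -/
lemma count_even (H : Setup F Q s) (b : ℕ) (hab : 2 * b = Q + 1) (hs : ¬ Odd s) (c : F)
    (hc : ∀ w : F, w ^ 2 ≠ c) :
    (Q : ℝ) * (univ.filter (fun x : F => ∃ y : F, y ^ Q + y = c * x ^ 2)).card =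
      (Q : ℝ) ^ (2 * s) + ((Q : ℝ) - 1) * (((2 : ℕ) - 1 : ℝ) * (Q : ℝ) ^ s) := by
  obtain ⟨ψ, hψ1, hψ⟩ := H.exists_char
  have h1 := H.G_one hψ1 hψ
  rw [if_neg hs] at h1
  obtain ⟨k, hk⟩ := H.dvdp
  have hk' := hk.symm
  have hoth := H.G_other hψ1 hψ (-1) (by norm_num) h1 k hk'
  have hrel := G_rel ψ 2 b (by omega) c
  have hq1 : 1 < Fintype.card F := Fintype.one_lt_card
  have hc0 : c ≠ 0 := fun h => hc 0 (by simp [h])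
  have hterm : ∀ u ∈ univ.erase (0 : F), G ψ (2 * b) (c * u ^ 2) = (((Q : ℝ) ^ s : ℝ) : ℂ) := by
    intro u hu
    have hu0 := (mem_erase.1 hu).1
    rw [hab, hoth _ (mul_ne_zero hc0 (pow_ne_zero _ hu0))]
    · push_cast; ring
    · intro h
      obtain ⟨w, hw⟩ := exists_root (Q + 1) k hk' _ h
      apply hc (w ^ b / u)
      rw [div_pow, ← pow_mul, mul_comm b 2, hab, hw]; field_simp
  rw [sum_congr rfl hterm, sum_const, card_erase_of_mem (mem_univ _), card_univ] at hrel
  have hG : G ψ 2 c = ((((2 : ℕ) - 1 : ℝ) * (Q : ℝ) ^ s : ℝ) : ℂ) := by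
    have hne : (Fintype.card F : ℂ) - 1 ≠ 0 := by
      rw [sub_ne_zero]; exact_mod_cast hq1.ne'
    apply mul_left_cancel₀ hne
    rw [hrel, nsmul_eq_mul]
    push_cast [Nat.cast_sub hq1.le]; ring
  have hp := H.points hψ1 hψ 2 b hab c
  rw [hG, H.hF] at hp
  exact_mod_cast hp

end Setup
end LRCaux


namespace LRCaux
open Finset

section zb
variable {F A : Type*} [Field F] [CommRing A] [Algebra F A]

/-- Span of monomials of weight at most `N`. -/
def L (F : Type*) {A : Type*} [Field F] [CommRing A] [Algebra F A] (x y : A) (Q a N : ℕ) :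
    Submodule F A :=
  Submodule.span F {z | ∃ i j : ℕ, Q * i + a * j ≤ N ∧ z = x ^ i * y ^ j}

variable {x y : A} {Q a : ℕ}

lemma mono_mem {N i j : ℕ} (h : Q * i + a * j ≤ N) : x ^ i * y ^ j ∈ L F x y Q a N :=
  Submodule.subset_span ⟨i, j, h, rfl⟩

lemma L_mono {N M : ℕ} (h : N ≤ M) : L F x y Q a N ≤ L F x y Q a M := by
  apply Submodule.span_mono
  rintro z ⟨i, j, h1, rfl⟩
  exact ⟨i, j, h1.trans h, rfl⟩

lemma L_mul {N M : ℕ} {f g : A} (hf : f ∈ L F x y Q a N) (hg : g ∈ L F x y Q a M) :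
    f * g ∈ L F x y Q a (N + M) := by
  have h := Submodule.mul_mem_mul hf hg
  unfold L at h
  rw [Submodule.span_mul_span] at h
  refine Submodule.span_mono ?_ h
  rintro z ⟨u, ⟨i, j, h1, rfl⟩, v, ⟨k, l, h2, rfl⟩, rfl⟩
  refine ⟨i + k, j + l, ?_, ?_⟩
  · rw [mul_add, mul_add]; omega
  · simp only; ring

lemma L_fd (hQ : 0 < Q) (ha : 0 < a) (N : ℕ) : FiniteDimensional F (L F x y Q a N) := by
  classical
  apply FiniteDimensional.span_of_finite
  apply Set.Finite.subset (((range (N + 1)) ×ˢ (range (N + 1))).image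
    (fun p : ℕ × ℕ => x ^ p.1 * y ^ p.2)).finite_toSet
  rintro z ⟨i, j, h, rfl⟩
  simp only [coe_image, Set.mem_image, mem_coe, mem_product, mem_range, Prod.exists]
  refine ⟨i, j, ⟨?_, ?_⟩, rfl⟩ <;> nlinarith

lemma L_step (c : F) (ha : 0 < a) (hQ : 1 < Q) (hc : y ^ Q + y = c • x ^ a) (N : ℕ) :
    L F x y Q a (N + Q) ≤ (L F x y Q a N).map (LinearMap.mulLeft F x) ⊔
      Submodule.span F (Set.range (fun j : Fin Q => y ^ (j : ℕ))) := by
  set W := (L F x y Q a N).map (LinearMap.mulLeft F x) ⊔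
      Submodule.span F (Set.range (fun j : Fin Q => y ^ (j : ℕ))) with hW
  have hx : ∀ i j : ℕ, Q * (i + 1) + a * j ≤ N + Q → x ^ (i + 1) * y ^ j ∈ W := by
    intro i j h
    apply Submodule.mem_sup_left
    refine ⟨x ^ i * y ^ j, mono_mem (by rw [mul_add] at h; omega), ?_⟩
    simp only [LinearMap.mulLeft_apply]; ring
  have hy : ∀ j : ℕ, a * j ≤ N + Q → y ^ j ∈ W := by
    intro j
    induction j using Nat.strong_induction_on with
    | _ j ih =>
      intro h
      by_cases hj : j < Q
      · apply Submodule.mem_sup_right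
        exact Submodule.subset_span ⟨⟨j, hj⟩, rfl⟩
      · obtain ⟨k, rfl⟩ : ∃ k, j = k + Q := ⟨j - Q, by omega⟩
        obtain ⟨a', rfl⟩ : ∃ a', a = a' + 1 := ⟨a - 1, by omega⟩
        have e : y ^ (k + Q) = c • (x ^ (a' + 1) * y ^ k) - y ^ (k + 1) := by
          rw [pow_add, eq_sub_of_add_eq hc, mul_sub, mul_smul_comm, mul_comm (y ^ k) (x ^ _), pow_succ y k]
        rw [e]
        apply Submodule.sub_mem
        · apply Submodule.smul_mem
          apply hx
          calc Q * (a' + 1) + (a' + 1) * k = (a' + 1) * (k + Q) := by ring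
            _ ≤ _ := h
        · apply ih _ (by omega)
          refine le_trans ?_ h
          apply Nat.mul_le_mul_left; omega
  apply Submodule.span_le.2
  rintro z ⟨i, j, h, rfl⟩
  rcases i with _ | i
  · rw [pow_zero, one_mul]
    exact hy j (by simpa using h)
  · exact hx i j h

lemma L_finrank_step (c : F) (ha : 0 < a) (hQ : 1 < Q) (hc : y ^ Q + y = c • x ^ a) (N t : ℕ) :
    Module.finrank F (L F x y Q a (N + t * Q)) ≤ Module.finrank F (L F x y Q a N) + t * Q := by
  induction t with
  | zero => rw [zero_mul, add_zero, add_zero]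
  | succ t ih =>
    have hfd := L_fd (F := F) (x := x) (y := y) (show 0 < Q by omega) ha
    have := hfd (N + t * Q)
    have hfs : FiniteDimensional F (Submodule.span F (Set.range (fun j : Fin Q => y ^ (j : ℕ)))) :=
      FiniteDimensional.span_of_finite F (Set.finite_range _)
    have h1 := Submodule.finrank_mono (L_step c ha hQ hc (N + t * Q))
    have h2 := Submodule.finrank_add_le_finrank_add_finrank
      ((L F x y Q a (N + t * Q)).map (LinearMap.mulLeft F x))
      (Submodule.span F (Set.range (fun j : Fin Q => y ^ (j : ℕ))))
    have h3 := Submodule.finrank_map_le (LinearMap.mulLeft F x) (L F x y Q a (N + t * Q))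
    have h4 : Module.finrank F (Submodule.span F (Set.range (fun j : Fin Q => y ^ (j : ℕ)))) ≤ Q := by
      have := finrank_range_le_card (R := F) (fun j : Fin Q => y ^ (j : ℕ))
      simpa [Set.finrank] using this
    have e : N + (t + 1) * Q = N + t * Q + Q := by ring
    rw [e]
    rw [show (t + 1) * Q = t * Q + Q by ring]
    omega

lemma exists_sep [DecidableEq F] (Z : Finset (F × F)) (ev : F × F → A →ₐ[F] F)
    (hx : ∀ z ∈ Z, ev z x = z.1) (hy : ∀ z ∈ Z, ev z y = z.2) (z : F × F) (hz : z ∈ Z) :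
    ∀ Z' ⊆ Z.erase z, ∃ g ∈ L F x y Q a ((Q + a) * Z'.card),
      ev z g ≠ 0 ∧ ∀ w ∈ Z', ev w g = 0 := by
  intro Z'
  induction Z' using Finset.induction_on with
  | empty =>
    intro _
    refine ⟨1, ?_, by simp, by simp⟩
    simpa using mono_mem (F := F) (x := x) (y := y) (Q := Q) (a := a) (i := 0) (j := 0) (Nat.zero_le 0)
  | insert w Z' hw ih =>
    intro hsub
    obtain ⟨g, hg, h1, h2⟩ := ih (fun u hu => hsub (mem_insert_of_mem hu))
    have hwZ := mem_erase.1 (hsub (mem_insert_self w Z'))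
    have hone : (1 : A) ∈ L F x y Q a (Q + a) := by
      simpa using mono_mem (F := F) (x := x) (y := y) (Q := Q) (a := a) (N := Q + a) (i := 0) (j := 0) (by simp)
    have : ∃ e ∈ L F x y Q a (Q + a), ev z e ≠ 0 ∧ ev w e = 0 := by
      by_cases h : z.1 = w.1
      · refine ⟨y - w.2 • 1, Submodule.sub_mem _ ?_ (Submodule.smul_mem _ _ hone), ?_, ?_⟩
        · simpa using mono_mem (F := F) (x := x) (y := y) (Q := Q) (a := a) (N := Q + a) (i := 0) (j := 1) (by simp)
        · rw [map_sub, map_smul, map_one, hy z hz, smul_eq_mul, mul_one, sub_ne_zero]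
          intro h'
          exact hwZ.1 (Prod.ext h.symm h'.symm)
        · rw [map_sub, map_smul, map_one, hy w hwZ.2, smul_eq_mul, mul_one, sub_self]
      · refine ⟨x - w.1 • 1, Submodule.sub_mem _ ?_ (Submodule.smul_mem _ _ hone), ?_, ?_⟩
        · simpa using mono_mem (F := F) (x := x) (y := y) (Q := Q) (a := a) (N := Q + a) (i := 1) (j := 0) (by simp)
        · rw [map_sub, map_smul, map_one, hx z hz, smul_eq_mul, mul_one, sub_ne_zero]
          exact h
        · rw [map_sub, map_smul, map_one, hx w hwZ.2, smul_eq_mul, mul_one, sub_self]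
    obtain ⟨e, he, he1, he2⟩ := this
    refine ⟨g * e, ?_, ?_, ?_⟩
    · rw [card_insert_of_notMem hw, mul_add, mul_one]
      exact L_mul hg he
    · rw [map_mul]; exact mul_ne_zero h1 he1
    · intro u hu
      rw [map_mul]
      rcases mem_insert.1 hu with rfl | hu
      · rw [he2, mul_zero]
      · rw [h2 u hu, zero_mul]

lemma zero_bound [IsDomain A] [DecidableEq F] (c : F) (ha : 0 < a) (hQ : 1 < Q)
    (hc : y ^ Q + y = c • x ^ a)
    (Z : Finset (F × F)) (ev : F × F → A →ₐ[F] F)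
    (hx : ∀ z ∈ Z, ev z x = z.1) (hy : ∀ z ∈ Z, ev z y = z.2) (t : ℕ) (f : A) (hf0 : f ≠ 0)
    (hf : f ∈ L F x y Q a (t * Q)) (hfZ : ∀ z ∈ Z, ev z f = 0) : Z.card ≤ t * Q := by
  set N := (Q + a) * Z.card with hN
  have hfd := L_fd (F := F) (x := x) (y := y) (show 0 < Q by omega) ha
  have hfd1 := hfd N
  have hfd2 := hfd (N + t * Q)
  let E0 : A →ₗ[F] (Z → F) := LinearMap.pi (fun z => (ev z.1).toLinearMap)
  let E : L F x y Q a (N + t * Q) →ₗ[F] (Z → F) := E0.comp (Submodule.subtype _)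
  have hsurj : LinearMap.range E = ⊤ := by
    rw [eq_top_iff, ← (Pi.basisFun F Z).span_eq, Submodule.span_le]
    rintro _ ⟨z, rfl⟩
    obtain ⟨g, hg, h1, h2⟩ := exists_sep (x := x) (y := y) (Q := Q) (a := a) Z ev hx hy z.1 z.2 _
      (Finset.Subset.refl _)
    have hg' : g ∈ L F x y Q a (N + t * Q) := by
      refine L_mono ?_ hg
      refine le_trans ?_ (Nat.le_add_right _ _)
      exact Nat.mul_le_mul_left _ (card_le_card (erase_subset _ _))
    refine ⟨⟨(ev z.1 g)⁻¹ • g, Submodule.smul_mem _ _ hg'⟩, ?_⟩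
    ext w
    rw [Pi.basisFun_apply]
    change ev w.1 ((ev z.1 g)⁻¹ • g) = _
    rw [map_smul, smul_eq_mul]
    by_cases hwz : w = z
    · subst hwz
      rw [Pi.single_eq_same, inv_mul_cancel₀ h1]
    · rw [Pi.single_eq_of_ne hwz, h2 w.1 (mem_erase.2 ⟨fun h => hwz (Subtype.ext h), w.2⟩), mul_zero]
  have hrn := LinearMap.finrank_range_add_finrank_ker E
  rw [hsurj, finrank_top, Module.finrank_fintype_fun_eq_card, Fintype.card_coe] at hrn
  have hker : Module.finrank F (L F x y Q a N) ≤ Module.finrank F (LinearMap.ker E) := by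
    let m : L F x y Q a N →ₗ[F] LinearMap.ker E :=
      LinearMap.codRestrict _
        (LinearMap.codRestrict (L F x y Q a (N + t * Q))
          ((LinearMap.mulLeft F f).comp (Submodule.subtype _))
          (fun g => by
            have := L_mul hf g.2
            rw [add_comm] at this
            exact this))
        (fun g => by
          rw [LinearMap.mem_ker]
          ext z
          change ev z.1 (f * g.1) = 0
          rw [map_mul, hfZ z.1 z.2, zero_mul])
    apply LinearMap.finrank_le_finrank_of_injective (f := m)
    intro g h hgh
    have : f * g.1 = f * h.1 := congrArg (fun u : LinearMap.ker E => ((u : L F x y Q a (N + t * Q)) : A)) hgh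
    exact Subtype.ext (mul_left_cancel₀ hf0 this)
  have := L_finrank_step (x := x) (y := y) c ha hQ hc N t
  omega

end zb

section model
open Polynomial

lemma exists_model.{u} {F : Type u} [Field F] (Q a : ℕ) (hQ : 1 < Q) (ha : 0 < a) (c : F) (hc : c ≠ 0) :
    ∃ (A : Type u) (_ : CommRing A) (_ : Algebra F A) (_ : IsDomain A) (x y : A),
      y ^ Q + y = c • x ^ a ∧
      ∀ z : F × F, z.2 ^ Q + z.2 = c * z.1 ^ a →
        ∃ ev : A →ₐ[F] F, ev x = z.1 ∧ ev y = z.2 := by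
  set w : F[X] := C c⁻¹ * (X ^ Q + X) with hw
  set P : F[X][X] := X ^ a - C w with hP
  have hmon : P.Monic := monic_X_pow_sub_C _ ha.ne'
  have hdeg : P.degree = a := degree_X_pow_sub_C ha _
  have hirr : Irreducible P := by
    apply irreducible_of_eisenstein_criterion (P := Ideal.span {(X : F[X])})
    · rw [Ideal.span_singleton_prime X_ne_zero]; exact prime_X
    · rw [hmon.leadingCoeff, Ideal.mem_span_singleton]
      exact fun h => not_isUnit_X (isUnit_of_dvd_one h)
    · intro n hn
      rw [hdeg, Nat.cast_lt] at hn
      rw [Ideal.mem_span_singleton, hP, coeff_sub, coeff_X_pow, if_neg hn.ne, zero_sub, dvd_neg,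
        coeff_C]
      split_ifs
      · rw [hw]
        apply Dvd.dvd.mul_left
        exact dvd_add (dvd_pow_self _ (by omega)) dvd_rfl
      · exact dvd_zero _
    · rw [hdeg]; exact_mod_cast ha
    · rw [Ideal.span_singleton_pow, Ideal.mem_span_singleton, hP, coeff_sub, coeff_X_pow,
        if_neg (by omega), zero_sub, dvd_neg, coeff_C_zero, X_pow_dvd_iff]
      intro h
      have := h 1 (by norm_num)
      rw [hw, coeff_C_mul, coeff_add, coeff_X_pow, if_neg (by omega), coeff_X_one] at this
      simp [hc] at this
    · exact hmon.isPrimitive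
  refine ⟨AdjoinRoot P, inferInstance, inferInstance, AdjoinRoot.isDomain_of_prime hirr.prime,
    AdjoinRoot.root P, AdjoinRoot.of P X, ?_, ?_⟩
  · have h := AdjoinRoot.eval₂_root P
    rw [hP, eval₂_sub, eval₂_X_pow, eval₂_C, ← hP, sub_eq_zero] at h
    rw [h, Algebra.smul_def, AdjoinRoot.algebraMap_eq', RingHom.comp_apply, ← map_mul, ← map_pow, ← map_add]
    congr 1
    rw [hw, ← mul_assoc]
    change _ = C c * C c⁻¹ * _
    rw [← C_mul, mul_inv_cancel₀ hc, C_1, one_mul]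
  · intro z hz
    refine ⟨AdjoinRoot.liftAlgHom P (aeval z.2) z.1 ?_, ?_, ?_⟩
    · rw [hP, eval₂_sub, eval₂_X_pow, eval₂_C, hw]
      simp [hz, hc]
    · simp
    · simp

end model
end LRCaux


namespace LRCaux
open Finset
set_option linter.unusedSectionVars false

section code
open Polynomial
variable {F : Type*} [Field F] [DecidableEq F]

lemma root_count {Q r : ℕ} (β : Fin Q → F) (hβ : Function.Injective β) (p : F[X]) (hp : p ≠ 0)
    (hd : p.degree < r) : (univ.filter (fun l => p.eval (β l) = 0)).card < r := by
  by_contra h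
  push Not at h
  apply hp
  apply Polynomial.eq_zero_of_degree_lt_of_eval_index_eq_zero (v := β)
    (s := univ.filter (fun l => p.eval (β l) = 0)) hβ.injOn
  · exact lt_of_lt_of_le hd (by exact_mod_cast h)
  · intro i hi
    exact (mem_filter.1 hi).2

/-- exponents of the monomials -/
def ex (t r : ℕ) : Option (Fin t × Fin r) → ℕ × ℕ
  | none => (t, 0)
  | some p => (p.1, p.2)

lemma ex_inj (t r : ℕ) : Function.Injective (ex t r) := by
  rintro (_ | ⟨i, j⟩) (_ | ⟨i', j'⟩) h
  · rfl
  · simp only [ex, Prod.mk.injEq] at h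
    have := i'.2; omega
  · simp only [ex, Prod.mk.injEq] at h
    have := i.2; omega
  · simp only [ex, Prod.mk.injEq] at h
    rw [Fin.ext h.1, Fin.ext h.2]

lemma ex_le1 (t r : ℕ) (o : Option (Fin t × Fin r)) : (ex t r o).1 ≤ t := by
  rcases o with _ | ⟨i, j⟩
  · exact le_rfl
  · exact i.2.le

lemma ex_lt2 (t r : ℕ) (hr : 0 < r) (o : Option (Fin t × Fin r)) : (ex t r o).2 < r := by
  rcases o with _ | ⟨i, j⟩
  · exact hr
  · exact j.2

/-- value of a message at a point -/
def val (t r : ℕ) (u : Option (Fin t × Fin r) → F) (x y : F) : F :=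
  ∑ o, u o * (x ^ (ex t r o).1 * y ^ (ex t r o).2)

noncomputable def pY (t r : ℕ) (u : Option (Fin t × Fin r) → F) (x : F) : F[X] :=
  ∑ o, C (u o * x ^ (ex t r o).1) * X ^ (ex t r o).2

noncomputable def qX (t r : ℕ) (u : Option (Fin t × Fin r) → F) (j : ℕ) : F[X] :=
  ∑ o, if (ex t r o).2 = j then C (u o) * X ^ (ex t r o).1 else 0

lemma pY_eval (t r : ℕ) (u : Option (Fin t × Fin r) → F) (x y : F) :
    (pY t r u x).eval y = val t r u x y := by
  simp only [pY, val, eval_finsetSum, eval_mul, eval_C, eval_pow, eval_X, mul_assoc]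

lemma pY_deg (t r : ℕ) (hr : 0 < r) (u : Option (Fin t × Fin r) → F) (x : F) :
    (pY t r u x).degree < r := by
  rw [← mem_degreeLT]
  apply Submodule.sum_mem
  intro o _
  rw [mem_degreeLT]
  refine lt_of_le_of_lt (degree_C_mul_X_pow_le _ _) ?_
  exact_mod_cast ex_lt2 t r hr o

lemma pY_coeff (t r : ℕ) (u : Option (Fin t × Fin r) → F) (x : F) (j : ℕ) :
    (pY t r u x).coeff j = (qX t r u j).eval x := by
  simp only [pY, qX, finsetSum_coeff, eval_finsetSum]
  apply sum_congr rfl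
  intro o _
  rw [coeff_C_mul, coeff_X_pow]
  by_cases h : (ex t r o).2 = j
  · rw [if_pos h.symm, if_pos h]; simp
  · rw [if_neg (fun h' => h h'.symm), if_neg h]; simp

lemma qX_deg (t r : ℕ) (u : Option (Fin t × Fin r) → F) (j : ℕ) :
    (qX t r u j).degree < ((t + 1 : ℕ) : WithBot ℕ) := by
  rw [← mem_degreeLT]
  apply Submodule.sum_mem
  intro o _
  split_ifs
  · rw [mem_degreeLT]
    refine lt_of_le_of_lt (degree_C_mul_X_pow_le _ _) ?_
    have := ex_le1 t r o
    exact_mod_cast Nat.lt_succ_of_le this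
  · exact Submodule.zero_mem _

lemma qX_coeff (t r : ℕ) (u : Option (Fin t × Fin r) → F) (o : Option (Fin t × Fin r)) :
    (qX t r u (ex t r o).2).coeff (ex t r o).1 = u o := by
  simp only [qX, finsetSum_coeff]
  rw [Finset.sum_eq_single o]
  · simp
  · intro o' _ hne
    split_ifs with h
    · rw [coeff_C_mul, coeff_X_pow, if_neg, mul_zero]
      intro h'
      exact hne (ex_inj t r (Prod.ext h'.symm h))
    · simp
  · simp

lemma val_inj {Q m t r : ℕ} (hr : 0 < r) (hrQ : r ≤ Q) (htm : t < m)
    (α : Fin m → F) (hα : Function.Injective α) (β : Fin m → Fin Q → F)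
    (hβ : ∀ k, Function.Injective (β k)) (u : Option (Fin t × Fin r) → F)
    (h : ∀ k l, val t r u (α k) (β k l) = 0) : u = 0 := by
  have hp : ∀ k, pY t r u (α k) = 0 := by
    intro k
    by_contra hne
    have := root_count (β k) (hβ k) _ hne (pY_deg t r hr u (α k))
    rw [filter_true_of_mem] at this
    · simp at this; omega
    · intro l _
      rw [pY_eval]; exact h k l
  have hq : ∀ j, qX t r u j = 0 := by
    intro j
    by_contra hne
    have := root_count α hα _ hne (qX_deg t r u j)
    rw [filter_true_of_mem] at this
    · simp at this; omega
    · intro k _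
      rw [← pY_coeff, hp, coeff_zero]
  ext o
  rw [← qX_coeff t r u o, hq, coeff_zero]; rfl

/-- the evaluation map -/
def encode (t r m Q : ℕ) (α : Fin m → F) (β : Fin m → Fin Q → F) :
    (Option (Fin t × Fin r) → F) →ₗ[F] (Fin (m * Q) → F) where
  toFun u := fun i => val t r u (α (finProdFinEquiv.symm i).1)
    (β (finProdFinEquiv.symm i).1 (finProdFinEquiv.symm i).2)
  map_add' u v := by
    ext i
    simp only [val, Pi.add_apply, add_mul, sum_add_distrib]
  map_smul' c u := by
    ext i
    simp only [val, Pi.smul_apply, smul_eq_mul, RingHom.id_apply, mul_sum, mul_assoc]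

lemma encode_apply (t r m Q : ℕ) (α : Fin m → F) (β : Fin m → Fin Q → F)
    (u : Option (Fin t × Fin r) → F) (k : Fin m) (l : Fin Q) :
    encode t r m Q α β u (finProdFinEquiv (k, l)) = val t r u (α k) (β k l) := by
  change val t r u (α (finProdFinEquiv.symm (finProdFinEquiv (k, l))).1)
    (β (finProdFinEquiv.symm (finProdFinEquiv (k, l))).1
      (finProdFinEquiv.symm (finProdFinEquiv (k, l))).2) = _
  rw [Equiv.symm_apply_apply]

lemma wt_encode (t r m Q : ℕ) (α : Fin m → F) (β : Fin m → Fin Q → F)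
    (u : Option (Fin t × Fin r) → F) :
    hammingWt (encode t r m Q α β u) =
      (univ.filter (fun p : Fin m × Fin Q => val t r u (α p.1) (β p.1 p.2) ≠ 0)).card := by
  unfold hammingWt
  symm
  apply card_bij (fun p _ => finProdFinEquiv p)
  · rintro ⟨k, l⟩ h
    simpa [encode_apply] using h
  · intro p _ p' _ h
    exact finProdFinEquiv.injective h
  · intro i hi
    refine ⟨finProdFinEquiv.symm i, ?_, Equiv.apply_symm_apply _ _⟩
    exact mem_filter.2 ⟨mem_univ _, (mem_filter.1 hi).2⟩

lemma zeros_le {Q m t r a b : ℕ} (hQ : 1 < Q) (hr : 0 < r) (hrQ : r ≤ Q) (hrb : r ≤ b) (ha : 0 < a)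
    (hab : a * b = Q + 1) (htm : t < m) (c : F) (hc : c ≠ 0)
    (α : Fin m → F) (hα : Function.Injective α) (β : Fin m → Fin Q → F)
    (hβ : ∀ k, Function.Injective (β k))
    (hcurve : ∀ k l, β k l ^ Q + β k l = c * α k ^ a)
    (u : Option (Fin t × Fin r) → F) (hu : u ≠ 0) :
    (univ.filter (fun p : Fin m × Fin Q => val t r u (α p.1) (β p.1 p.2) = 0)).card ≤ t * Q := by
  obtain ⟨A, _, _, _, x, y, hxy, hev⟩ := exists_model Q a hQ ha c hc
  have hev' : ∀ z : F × F, ∃ ev : A →ₐ[F] F, z.2 ^ Q + z.2 = c * z.1 ^ a → ev x = z.1 ∧ ev y = z.2 := by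
    intro z
    by_cases h : z.2 ^ Q + z.2 = c * z.1 ^ a
    · obtain ⟨e, he⟩ := hev z h
      exact ⟨e, fun _ => he⟩
    · obtain ⟨e, he⟩ := hev (α ⟨0, by omega⟩, β ⟨0, by omega⟩ ⟨0, by omega⟩) (hcurve _ _)
      exact ⟨e, fun h' => absurd h' h⟩
  choose ev hev2 using hev'
  set f : A := ∑ o, u o • (x ^ (ex t r o).1 * y ^ (ex t r o).2) with hf
  have hevf : ∀ z : F × F, z.2 ^ Q + z.2 = c * z.1 ^ a → ev z f = val t r u z.1 z.2 := by
    intro z hz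
    obtain ⟨h1, h2⟩ := hev2 z hz
    simp only [hf, map_sum, map_smul, map_mul, map_pow, h1, h2, smul_eq_mul, val]
  have hinj : Function.Injective (fun p : Fin m × Fin Q => (α p.1, β p.1 p.2)) := by
    rintro ⟨k, l⟩ ⟨k', l'⟩ h
    simp only [Prod.mk.injEq] at h
    obtain ⟨h1, h2⟩ := h
    have := hα h1
    subst this
    rw [hβ k h2]
  rw [← card_image_of_injective _ hinj]
  have hcv : ∀ z ∈ (univ.filter (fun p : Fin m × Fin Q => val t r u (α p.1) (β p.1 p.2) = 0)).image
      (fun p : Fin m × Fin Q => (α p.1, β p.1 p.2)),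
      z.2 ^ Q + z.2 = c * z.1 ^ a ∧ val t r u z.1 z.2 = 0 := by
    intro z hz
    obtain ⟨p, hp, rfl⟩ := mem_image.1 hz
    exact ⟨hcurve _ _, (mem_filter.1 hp).2⟩
  apply zero_bound (x := x) (y := y) c ha hQ hxy _ ev
    (fun z hz => (hev2 z (hcv z hz).1).1) (fun z hz => (hev2 z (hcv z hz).1).2) t f
  · intro h0
    apply hu
    apply val_inj hr hrQ htm α hα β hβ
    intro k l
    have := hevf (α k, β k l) (hcurve k l)
    rw [h0, map_zero] at this
    exact this.symm
  · apply Submodule.sum_mem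
    intro o _
    apply Submodule.smul_mem
    apply mono_mem
    rcases o with _ | ⟨i, j⟩
    · simp [ex, mul_comm]
    · simp only [ex]
      have h1 : (i : ℕ) + 1 ≤ t := i.2
      have h2 : (j : ℕ) + 1 ≤ b := le_trans j.2 hrb
      have h3 : Q * ((i : ℕ) + 1) ≤ Q * t := Nat.mul_le_mul_left _ h1
      have h4 : a * ((j : ℕ) + 1) ≤ a * b := Nat.mul_le_mul_left _ h2
      rw [mul_add] at h3 h4
      rw [mul_comm t Q]
      omega
  · intro z hz
    rw [hevf z (hcv z hz).1]
    exact (hcv z hz).2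

/-- the message of a polynomial in x only -/
noncomputable def msg (t r : ℕ) (g : F[X]) : Option (Fin t × Fin r) → F :=
  fun o => if (ex t r o).2 = 0 then g.coeff (ex t r o).1 else 0

lemma val_msg (t r : ℕ) (hr : 0 < r) (g : F[X]) (hg : g.natDegree ≤ t) (x y : F) :
    val t r (msg t r g) x y = g.eval x := by
  rw [eval_eq_sum_range' (n := t + 1) (by omega), sum_range_succ]
  unfold val
  rw [Fintype.sum_option, Fintype.sum_prod_type, add_comm]
  congr 1
  · rw [← Fin.sum_univ_eq_sum_range (fun i => g.coeff i * x ^ i)]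
    apply sum_congr rfl
    intro i _
    rw [Finset.sum_eq_single ⟨0, hr⟩]
    · simp [msg, ex]
    · intro j _ hj
      have : (j : ℕ) ≠ 0 := fun h => hj (Fin.ext h)
      simp [msg, ex, this]
    · simp
  · simp [msg, ex]

lemma main_code {Q m t r a b : ℕ} (hQ : 1 < Q) (hr : 0 < r) (hrQ : r ≤ Q) (hrb : r ≤ b) (ha : 0 < a)
    (hab : a * b = Q + 1) (htm : t < m) (c : F) (hc : c ≠ 0)
    (α : Fin m → F) (hα : Function.Injective α) (β : Fin m → Fin Q → F)
    (hβ : ∀ k, Function.Injective (β k))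
    (hcurve : ∀ k l, β k l ^ Q + β k l = c * α k ^ a) :
    ExistsOptimalLRC F (m * Q) (t * r + 1) ((m - t) * Q) r (Q + 1 - r) := by
  have hinj : Function.Injective (encode t r m Q α β) := by
    rw [← LinearMap.ker_eq_bot, LinearMap.ker_eq_bot']
    intro u hu
    apply val_inj hr hrQ htm α hα β hβ
    intro k l
    rw [← encode_apply, hu]; rfl
  have hsplit : ∀ u : Option (Fin t × Fin r) → F,
      (univ.filter (fun p : Fin m × Fin Q => val t r u (α p.1) (β p.1 p.2) = 0)).card +
      (univ.filter (fun p : Fin m × Fin Q => val t r u (α p.1) (β p.1 p.2) ≠ 0)).card = m * Q := by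
    intro u
    have := card_filter_add_card_filter_not (s := (univ : Finset (Fin m × Fin Q)))
      (fun p => val t r u (α p.1) (β p.1 p.2) = 0)
    rw [card_univ, Fintype.card_prod, Fintype.card_fin, Fintype.card_fin] at this
    exact this
  have hsub : (m - t) * Q = m * Q - t * Q := Nat.sub_mul _ _ _
  have htQ : t * Q ≤ m * Q := Nat.mul_le_mul_right _ htm.le
  refine ⟨LinearMap.range (encode t r m Q α β), ?_, ⟨?_, ?_⟩, ?_, ?_⟩
  · rw [LinearMap.finrank_range_of_inj hinj, Module.finrank_fintype_fun_eq_card]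
    simp
  · rintro _ ⟨u, rfl⟩ hne
    have hu : u ≠ 0 := by rintro rfl; simp at hne
    have h1 := zeros_le hQ hr hrQ hrb ha hab htm c hc α hα β hβ hcurve u hu
    have h2 := hsplit u
    rw [wt_encode]
    omega
  · set g : F[X] := ∏ k ∈ univ.filter (fun k : Fin m => (k : ℕ) < t), (X - C (α k)) with hg
    have hcard : (univ.filter (fun k : Fin m => (k : ℕ) < t)).card = t := by
      rw [Fin.card_filter_val_lt]; omega
    have hgd : g.natDegree ≤ t := by
      rw [hg, natDegree_prod_of_monic _ _ (fun k _ => monic_X_sub_C _)]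
      simp [hcard]
    have hgz : ∀ k : Fin m, g.eval (α k) = 0 ↔ (k : ℕ) < t := by
      intro k
      rw [hg, eval_prod, prod_eq_zero_iff]
      constructor
      · rintro ⟨k', hk', h⟩
        rw [eval_sub, eval_X, eval_C, sub_eq_zero] at h
        rw [hα h]
        exact (mem_filter.1 hk').2
      · intro h
        exact ⟨k, by simp [h], by simp⟩
    have hwt : hammingWt (encode t r m Q α β (msg t r g)) = (m - t) * Q := by
      rw [wt_encode]
      have h2 := hsplit (msg t r g)
      have h3 : (univ.filter (fun p : Fin m × Fin Q =>
          val t r (msg t r g) (α p.1) (β p.1 p.2) = 0)) =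
          (univ.filter (fun k : Fin m => (k : ℕ) < t)) ×ˢ univ := by
        ext ⟨k, l⟩
        simp [val_msg t r hr g hgd, hgz]
      rw [h3, card_product, hcard, card_univ, Fintype.card_fin] at h2
      omega
    refine ⟨_, ⟨msg t r g, rfl⟩, ?_, hwt⟩
    intro h0
    rw [h0] at hwt
    have : 0 < (m - t) * Q := Nat.mul_pos (by omega) (by omega)
    simp [hammingWt] at hwt
    omega
  · intro i
    obtain ⟨⟨k, l⟩, rfl⟩ := finProdFinEquiv.surjective i
    refine ⟨univ.image (fun l : Fin Q => finProdFinEquiv (k, l)), ?_, ?_, ?_⟩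
    · exact mem_image_of_mem _ (mem_univ _)
    · refine card_image_le.trans ?_
      rw [card_univ, Fintype.card_fin]; omega
    · rintro _ ⟨u, rfl⟩ ⟨j, hj, hne⟩
      obtain ⟨l', _, rfl⟩ := mem_image.1 hj
      rw [encode_apply] at hne
      have hp : pY t r u (α k) ≠ 0 := by
        intro h
        rw [← pY_eval, h, eval_zero] at hne
        exact hne rfl
      have h1 := root_count (β k) (hβ k) _ hp (pY_deg t r hr u (α k))
      rw [filter_image, card_image_of_injective]
      · simp only [encode_apply]
        simp only [pY_eval] at h1
        have := card_filter_add_card_filter_not (s := (univ : Finset (Fin Q)))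
          (fun l => val t r u (α k) (β k l) = 0)
        rw [card_univ, Fintype.card_fin] at this
        simp only [ne_eq]
        omega
      · intro l1 l2 h
        have := finProdFinEquiv.injective h
        exact (Prod.ext_iff.1 this).2
  · unfold SingletonOptimal
    have e : (t * r + 1 + r - 1) / r = t + 1 := by
      rw [show t * r + 1 + r - 1 = r * (t + 1) by rw [mul_add, mul_comm t r]; omega]
      exact Nat.mul_div_cancel_left _ hr
    rw [e]
    push_cast [Nat.cast_sub htm.le, Nat.cast_sub (show r ≤ Q + 1 by omega)]
    ring

end code
end LRCaux


namespace LRCaux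
open Finset

lemma setup_of {Q s : ℕ} (hQ : IsPrimePow Q) (hs : 0 < s) (F : Type*) [Field F] [Fintype F]
    (hF : Fintype.card F = Q ^ (2 * s)) : Setup F Q s := by
  obtain ⟨p, e, hp, he, rfl⟩ := hQ
  have hp' : p.Prime := Nat.prime_iff.2 hp
  refine ⟨Nat.one_lt_pow he.ne' hp'.one_lt, hs, hF, ?_⟩
  obtain ⟨p', hc⟩ := CharP.exists F
  obtain ⟨n, hn, hcard⟩ := FiniteField.card F p'
  have hpp : p' = p := by
    rw [hcard, ← pow_mul] at hF
    have h1 : p' ∣ p ^ (e * (2 * s)) := by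
      rw [← hF]; exact dvd_pow_self _ n.2.ne'
    exact (Nat.prime_dvd_prime_iff_eq hn hp').1 (hn.dvd_of_dvd_pow h1)
  subst hpp
  have : Fact p'.Prime := ⟨hp'⟩
  intro x y
  exact add_pow_char_pow x y p' e

lemma finish {F : Type*} [Field F] [Fintype F] [DecidableEq F] {Q s m t r a b : ℕ}
    (H : Setup F Q s) (hr : 0 < r) (hrQ : r ≤ Q) (hrb : r ≤ b) (ha : 0 < a)
    (hab : a * b = Q + 1) (htm : t < m) (c : F) (hc : c ≠ 0)
    (hm : m ≤ (univ.filter (fun x : F => ∃ y, y ^ Q + y = c * x ^ a)).card) :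
    ExistsOptimalLRC F (m * Q) (t * r + 1) ((m - t) * Q) r (Q + 1 - r) := by
  obtain ⟨N, hN, hNc⟩ := exists_subset_card_eq hm
  let e := (N.equivFinOfCardEq hNc).symm
  have hmem : ∀ k, ∃ y, y ^ Q + y = c * (e k : F) ^ a :=
    fun k => (mem_filter.1 (hN (e k).2)).2
  let f := fun k => (Finset.equivFinOfCardEq (H.card_fib _ (hmem k))).symm
  refine main_code H.hQ hr hrQ hrb ha hab htm c hc (fun k => (e k : F)) ?_
    (fun k l => (f k l : F)) ?_ ?_
  · exact Subtype.val_injective.comp e.injective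
  · intro k
    exact Subtype.val_injective.comp (f k).injective
  · intro k l
    exact (mem_filter.1 (f k l).2).2

lemma bound {Q s m a b n : ℕ} (hQ : 1 < Q) (hb : 0 < b) (hab : a * b = Q + 1)
    (hm : (m : ℚ) ≤ (((Q ^ (2 * s) : ℕ) : ℚ) +
      (((Q : ℚ) + 1) / (b : ℚ) - 1) * ((Q : ℚ) - 1) * (Q : ℚ) ^ s) / (Q : ℚ))
    (h : (Q : ℝ) * n = (Q : ℝ) ^ (2 * s) + ((Q : ℝ) - 1) * (((a : ℝ) - 1) * (Q : ℝ) ^ s)) :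
    m ≤ n := by
  have h' : (Q : ℚ) * n = (Q : ℚ) ^ (2 * s) + ((Q : ℚ) - 1) * (((a : ℚ) - 1) * (Q : ℚ) ^ s) := by
    exact_mod_cast h
  have hQ0 : (0 : ℚ) < Q := by exact_mod_cast (by omega : 0 < Q)
  have hb0 : (b : ℚ) ≠ 0 := by exact_mod_cast hb.ne'
  have e : ((Q : ℚ) + 1) / b = a := by
    rw [div_eq_iff hb0]; exact_mod_cast hab.symm
  rw [e, le_div_iff₀ hQ0] at hm
  push_cast at hm
  have : (m : ℚ) ≤ n := by
    refine le_of_mul_le_mul_left ?_ hQ0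
    rw [h']; linarith
  exact_mod_cast this

end LRCaux

/-- Let `Q` be a prime power, `b ∣ Q+1` with `1 < b < Q+1`, `s` a
positive integer which is odd (or, alternatively, `Q` is odd and `b = (Q+1)/2`),
and `q = Q^(2s)`. For `0 ≤ b' ≤ b-2`, `r = b - b'`, `δ = Q + 1 - r`, and all
`1 ≤ t < m ≤ (q + ((Q+1)/b - 1)(Q-1)Q^s)/Q`, there exists an optimal `(r, δ)`-LRC
with parameters `[mQ, tr+1, (m-t)Q]_q`. -/
theorem stmt_13 (Q : ℕ) (hQ : IsPrimePow Q)
    (b : ℕ) (hb1 : 1 < b) (hb2 : b < Q + 1) (hbdvd : b ∣ Q + 1)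
    (s : ℕ) (hs : 0 < s) (hcase : Odd s ∨ (Odd Q ∧ 2 * b = Q + 1))
    (q : ℕ) (hq : q = Q ^ (2 * s))
    (b' : ℕ) (hb' : b' ≤ b - 2)
    (r δ : ℕ) (hr : r = b - b') (hδ : δ = Q + 1 - r)
    (t m : ℕ) (ht : 1 ≤ t) (htm : t < m)
    (hm : (m : ℚ) ≤ ((q : ℚ) + (((Q : ℚ) + 1) / (b : ℚ) - 1) * ((Q : ℚ) - 1) * (Q : ℚ) ^ s)
        / (Q : ℚ))
    (F : Type*) [Field F] [Fintype F] [DecidableEq F] (hF : Fintype.card F = q) :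
    ExistsOptimalLRC F (m * Q) (t * r + 1) ((m - t) * Q) r δ := by
  subst hq hr hδ
  have H := LRCaux.setup_of hQ hs F hF
  obtain ⟨a, ha⟩ := hbdvd
  have hab : a * b = Q + 1 := by rw [ha, mul_comm]
  have ha0 : 0 < a := by
    rcases Nat.eq_zero_or_pos a with h | h
    · subst h; omega
    · exact h
  by_cases hodd : Odd s
  · refine LRCaux.finish H (by omega) (by omega) (by omega) ha0 hab htm 1 one_ne_zero ?_
    exact LRCaux.bound H.hQ (by omega) hab hm (H.count_odd a b hab hodd)
  · obtain ⟨hQo, h2⟩ := hcase.resolve_left hodd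
    have ha2 : a = 2 := Nat.eq_of_mul_eq_mul_right (by omega : 0 < b) (hab.trans h2.symm)
    subst ha2
    have hchar : ringChar F ≠ 2 := by
      intro h
      have h3 := FiniteField.even_card_of_char_two h
      rw [hF] at h3
      have h4 : Odd (Q ^ (2 * s)) := hQo.pow
      rw [Nat.odd_iff] at h4
      omega
    obtain ⟨c, hc⟩ := FiniteField.exists_nonsquare hchar
    have hc' : ∀ w, w ^ 2 ≠ c := by
      rintro w rfl
      exact hc (IsSquare.sq w)
    have hc0 : c ≠ 0 := by
      rintro rfl
      exact hc IsSquare.zero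
    refine LRCaux.finish H (by omega) (by omega) (by omega) ha0 hab htm c hc0 ?_
    exact LRCaux.bound H.hQ (by omega) hab hm (by simpa using H.count_even b hab hodd c hc')
end

section
/- Let Q be a prime power, let s be an odd positive integer, and let q = Q^{2s}. Then for all integers t, m with 1 ≤ t < m ≤ ⌊(q + Q(Q−1)Q^{s})/(Q+1)⌋, there exists an optimal (2, Q)-LRC over F_q with parameters [m(Q+1), 2t+1, (m−t)(Q+1)]_q. Moreover, if Q = 2, the same conclusion holds for every positive integer s (not necessarily odd). -/
def herL {F : Type*} [Field F] (Q s : ℕ) (z : F) : F :=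
  ∑ i ∈ Finset.range (2 * s), (-1) ^ i * z ^ (Q ^ i)

section
variable {F : Type*} [Field F]

theorem her_addpow {Q : ℕ} (σ : F →+* F) (hσ : ∀ x, σ x = x ^ Q) (i : ℕ) (a b : F) :
    (a + b) ^ (Q ^ i) = a ^ (Q ^ i) + b ^ (Q ^ i) := by
  induction i with
  | zero => simp
  | succ i ih => rw [pow_succ, pow_mul, ih, ← hσ, map_add, hσ, hσ, pow_mul, pow_mul]

theorem herL_add {Q s : ℕ} (σ : F →+* F) (hσ : ∀ x, σ x = x ^ Q) (a b : F) :
    herL Q s (a + b) = herL Q s a + herL Q s b := by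
  simp only [herL, her_addpow σ hσ, mul_add, Finset.sum_add_distrib]

theorem herL_pow {Q s : ℕ} [Fintype F] (hcard : Fintype.card F = Q ^ (2 * s)) (z : F) :
    herL Q s (z ^ Q) = - herL Q s z := by
  have h := Finset.sum_range_succ (fun i => (-1 : F) ^ i * z ^ (Q ^ i)) (2 * s)
  have h' := Finset.sum_range_succ' (fun i => (-1 : F) ^ i * z ^ (Q ^ i)) (2 * s)
  rw [h] at h'
  have hz : z ^ Q ^ (2 * s) = z := by rw [← hcard]; exact FiniteField.pow_card z
  rw [hz] at h'
  simp only [pow_mul (-1 : F), neg_one_sq, one_pow, one_mul, pow_zero, pow_one, add_left_inj] at h'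
  rw [herL, herL, h', ← Finset.sum_neg_distrib]
  refine Finset.sum_congr rfl fun i _ => ?_
  rw [← pow_mul, pow_succ Q, mul_comm (Q^i) Q]
  ring

theorem pow_herL {Q s : ℕ} [Fintype F] (hcard : Fintype.card F = Q ^ (2 * s))
    (σ : F →+* F) (hσ : ∀ x, σ x = x ^ Q) (z : F) :
    (herL Q s z) ^ Q = - herL Q s z := by
  rw [← herL_pow hcard, ← hσ, herL, map_sum, herL]
  refine Finset.sum_congr rfl fun i _ => ?_
  rw [map_mul, map_pow, map_neg, map_one, map_pow, hσ]

theorem herL_smul {Q s : ℕ} (e : F) (he : e ^ Q = e) (z : F) :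
    herL Q s (e * z) = e * herL Q s z := by
  have h : ∀ i, e ^ (Q ^ i) = e := by
    intro i
    induction i with
    | zero => simp
    | succ i ih => rw [pow_succ, pow_mul, ih, he]
  rw [herL, herL, Finset.mul_sum]
  refine Finset.sum_congr rfl fun i _ => ?_
  rw [mul_pow, h]; ring

theorem herL_fix {Q s : ℕ} (e : F) (he : e ^ Q = e) : herL Q s e = 0 := by
  have h : herL Q s (1 : F) = 0 := by
    simp only [herL, one_pow, mul_one]
    induction s with
    | zero => simp
    | succ n ih =>
      rw [show 2 * (n+1) = 2*n+1+1 by ring, Finset.sum_range_succ, Finset.sum_range_succ, ih]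
      simp [pow_succ]
  have := herL_smul (s := s) e he 1
  rw [h] at this; simpa using this

def herLHom (Q s : ℕ) (σ : F →+* F) (hσ : ∀ x, σ x = x ^ Q) : F →+ F :=
  AddMonoidHom.mk' (herL Q s) (herL_add σ hσ)

def herPhi (Q : ℕ) (σ : F →+* F) (hσ : ∀ x, σ x = x ^ Q) : F →+ F :=
  AddMonoidHom.mk' (fun y => y ^ Q + y) (fun a b => by
    simp only [← hσ, map_add]; ring)

open Polynomial in
theorem her_roots_le [Fintype F] [DecidableEq F] (p : F[X]) (hp : p ≠ 0) (n : ℕ)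
    (hn : p.natDegree ≤ n) :
    (Finset.univ.filter (fun x => p.eval x = 0)).card ≤ n := by
  refine le_trans (Finset.card_le_card (t := p.roots.toFinset) ?_)
    ((Multiset.toFinset_card_le _).trans ((card_roots' p).trans hn))
  intro x hx
  simpa [hp] using hx

open Polynomial in
theorem her_card_ker_phi_le [Fintype F] [DecidableEq F] {Q : ℕ} (hQ : 2 ≤ Q) (b : F) :
    (Finset.univ.filter (fun x : F => x ^ Q + x = b)).card ≤ Q := by
  have h : (X ^ Q + X - C b : F[X]).natDegree = Q := by
    compute_degree! <;> try omega
    · simp [show 1 ≠ Q by omega, show Q ≠ 0 by omega]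
  have := her_roots_le (X ^ Q + X - C b : F[X]) (by rintro h0; rw [h0] at h; simp at h; omega) Q h.le
  simpa [sub_eq_zero] using this

open Polynomial in
theorem her_card_ker_L_le [Fintype F] [DecidableEq F] {Q s : ℕ} (hQ : 2 ≤ Q) (hs : 0 < s) :
    (Finset.univ.filter (fun x : F => herL Q s x = 0)).card ≤ Q ^ (2 * s - 1) := by
  have := her_roots_le (∑ i ∈ Finset.range (2 * s), C ((-1) ^ i) * X ^ (Q ^ i) : F[X]) ?_
    (Q ^ (2 * s - 1)) ?_
  · convert this using 4
    simp [eval_finsetSum, herL]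
  · intro h
    have := congrArg (fun p => p.coeff 1) h
    simp only [finsetSum_coeff, coeff_C_mul, coeff_X_pow, coeff_zero] at this
    rw [Finset.sum_eq_single 0] at this
    · simp at this
    · intro i _ hi
      have : 1 < Q ^ i := Nat.one_lt_pow hi (by omega)
      rw [if_neg (by omega)]; simp
    · intro h; simp at h; omega
  · refine natDegree_sum_le_of_forall_le _ _ fun i hi => ?_
    refine (natDegree_C_mul_X_pow_le _ _).trans (Nat.pow_le_pow_right (by omega) ?_)
    simp at hi; omega

theorem her_main [Fintype F] [DecidableEq F] {Q s : ℕ} (hQ : 2 ≤ Q) (hs : 0 < s)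
    (hcard : Fintype.card F = Q ^ (2 * s)) (σ : F →+* F) (hσ : ∀ x, σ x = x ^ Q) :
    (∀ c : F, herL Q s c = 0 → (Finset.univ.filter (fun y : F => y ^ Q + y = c)).card = Q) ∧
    (∀ c : F, c ^ Q = - c →
      (Finset.univ.filter (fun y : F => herL Q s y = c)).card = Q ^ (2 * s - 1)) := by
  set L := herLHom Q s σ hσ
  set P := herPhi Q σ hσ
  have hL : ∀ x, L x = herL Q s x := fun _ => rfl
  have hP : ∀ x, P x = x ^ Q + x := fun _ => rfl
  have hker : ∀ g : F →+ F, Nat.card g.ker = (Finset.univ.filter (fun y : F => g y = 0)).card := by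
    intro g
    rw [← Fintype.card_subtype, ← Nat.card_eq_fintype_card]
    rfl
  have hprod : ∀ g : F →+ F, Nat.card g.range * Nat.card g.ker = Q ^ (2 * s) := by
    intro g
    rw [← hcard, ← Nat.card_eq_fintype_card, ← AddSubgroup.index_ker, AddSubgroup.index_mul_card]
  have hkP : Nat.card P.ker ≤ Q := by
    rw [hker]; exact her_card_ker_phi_le hQ 0
  have hkL : Nat.card L.ker ≤ Q ^ (2 * s - 1) := by
    rw [hker]; exact her_card_ker_L_le hQ hs
  have hPL : P.range ≤ L.ker := by
    rintro _ ⟨y, rfl⟩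
    rw [AddMonoidHom.mem_ker, hP, map_add, hL, herL_pow hcard, hL]; ring
  have hLP : L.range ≤ P.ker := by
    rintro _ ⟨y, rfl⟩
    rw [AddMonoidHom.mem_ker, hP, hL, pow_herL hcard σ hσ]; ring
  have hPL' := AddSubgroup.card_le_of_le hPL
  have hLP' := AddSubgroup.card_le_of_le hLP
  have hpp : Q ^ (2 * s) = Q * Q ^ (2 * s - 1) := by
    rw [← pow_succ']; congr 1; omega
  have hpos : 0 < Q ^ (2 * s - 1) := by positivity
  have e1 : Nat.card P.ker = Q := by
    have := hprod P
    nlinarith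
  have e2 : Nat.card L.ker = Q ^ (2 * s - 1) := by
    have := hprod L
    nlinarith
  have e3 : Nat.card P.range = Q ^ (2 * s - 1) := by
    have := hprod P
    rw [e1, hpp, mul_comm] at this
    exact Nat.eq_of_mul_eq_mul_left (by omega) this
  have e4 : Nat.card L.range = Q := by
    have := hprod L
    rw [e2, hpp] at this
    exact Nat.eq_of_mul_eq_mul_right hpos this
  have r1 : P.range = L.ker := AddSubgroup.eq_of_le_of_card_ge hPL (by omega)
  have r2 : L.range = P.ker := AddSubgroup.eq_of_le_of_card_ge hLP (by omega)
  constructor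
  · intro c hc
    have hc' : c ∈ P.range := by rw [r1]; exact hc
    have := AddMonoidHom.card_fiber_eq_of_mem_range P (x := c) (y := 0) hc' ⟨0, map_zero _⟩
    rw [← hker, e1] at this
    exact this
  · intro c hc
    have hc' : c ∈ L.range := by rw [r2, AddMonoidHom.mem_ker, hP, hc]; ring
    have := AddMonoidHom.card_fiber_eq_of_mem_range L (x := c) (y := 0) hc' ⟨0, map_zero _⟩
    rw [← hker, e2] at this
    exact this
end

section
variable {F : Type*} [Field F]

theorem her_prim [Fintype F] (n : ℕ) (hn : n ∣ Fintype.card F - 1) : ∃ ζ : F, IsPrimitiveRoot ζ n := by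
  classical
  obtain ⟨g, hg⟩ := IsCyclic.exists_generator (α := Fˣ)
  have ho : orderOf g = Fintype.card F - 1 := by
    rw [orderOf_eq_card_of_forall_mem_zpowers hg, Nat.card_eq_fintype_card, Fintype.card_units]
  have hp := IsPrimitiveRoot.orderOf g
  rw [ho] at hp
  have hpos : 0 < Fintype.card F - 1 := by
    have := Fintype.one_lt_card (α := F); omega
  obtain ⟨k, hk⟩ := hn
  exact ⟨((g ^ k : Fˣ) : F), IsPrimitiveRoot.coe_units_iff.mpr (hp.pow hpos (by rw [hk, mul_comm]))⟩

open Polynomial in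
theorem her_fib [Fintype F] [DecidableEq F] (n : ℕ) (hn0 : 0 < n) (hn : n ∣ Fintype.card F - 1) (x : F) (hx : x ≠ 0) :
    (Finset.univ.filter (fun y : F => y ^ n = x ^ n)).card = n := by
  obtain ⟨ζ, hζ⟩ := her_prim n hn
  have h := hζ.card_nthRoots (x ^ n)
  rw [if_pos ⟨x, rfl⟩] at h
  have h2 : (Finset.univ.filter (fun y : F => y ^ n = x ^ n)) = (nthRoots n (x ^ n)).toFinset := by
    ext y; simp [mem_nthRoots hn0]
  rw [h2, Multiset.toFinset_card_of_nodup, h]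
  exact hζ.nthRoots_nodup (pow_ne_zero _ hx)

theorem her_dvd (Q s : ℕ) : (Q ^ 2 - 1) ∣ Q ^ (2 * s) - 1 := by
  rw [pow_mul]; simpa using Nat.sub_dvd_pow_sub_pow (Q ^ 2) 1 s

theorem her_sq (Q : ℕ) : Q ^ 2 - 1 = (Q + 1) * (Q - 1) := by
  have := Nat.sq_sub_sq Q 1
  simpa using this

theorem her_fixcard [Fintype F] [DecidableEq F] {Q s : ℕ} (hQ : 2 ≤ Q)
    (hcard : Fintype.card F = Q ^ (2 * s)) :
    (Finset.univ.filter (fun y : F => y ^ (Q ^ 2) = y)).card = Q ^ 2 := by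
  have h1 : 1 < Q ^ 2 := Nat.one_lt_pow (by omega) (by omega)
  have h := her_fib (F := F) (Q ^ 2 - 1) (by omega) (by rw [hcard]; exact her_dvd Q s) 1 one_ne_zero
  have h2 : (Finset.univ.filter (fun y : F => y ^ (Q ^ 2) = y)) =
      insert 0 (Finset.univ.filter (fun y : F => y ^ (Q ^ 2 - 1) = 1 ^ (Q ^ 2 - 1))) := by
    ext y
    simp only [Finset.mem_filter, Finset.mem_univ, true_and, Finset.mem_insert, one_pow]
    by_cases hy : y = 0
    · simp [hy]; omega
    · have : y ^ (Q ^ 2) = y ^ (Q ^ 2 - 1) * y := by rw [← pow_succ]; congr 1; omega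
      rw [this]; simp [hy]
  rw [h2, Finset.card_insert_of_notMem, h]
  · omega
  · simp [zero_pow (show Q ^ 2 - 1 ≠ 0 by omega)]

theorem her_norm [Fintype F] {Q s : ℕ} (hQ : 2 ≤ Q)
    (hcard : Fintype.card F = Q ^ (2 * s)) (e : F) (he0 : e ≠ 0) (he : e ^ Q = e) :
    ∃ a : F, a ^ (Q + 1) = e := by
  have hd : Q ^ 2 - 1 ∣ Fintype.card F - 1 := by rw [hcard]; exact her_dvd Q s
  obtain ⟨ζ, hζ⟩ := her_prim (F := F) (Q ^ 2 - 1) hd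
  have h1 : 1 < Q ^ 2 := Nat.one_lt_pow (by omega) (by omega)
  have h2 : IsPrimitiveRoot (ζ ^ (Q + 1)) (Q - 1) := hζ.pow (by omega) (her_sq Q)
  have : NeZero (Q - 1) := ⟨by omega⟩
  have h3 : e ^ (Q - 1) = 1 := by
    have : e ^ Q = e ^ (Q - 1) * e := by rw [← pow_succ]; congr 1; omega
    rw [this] at he
    simpa [he0] using he
  obtain ⟨i, -, hi⟩ := h2.eq_pow_of_pow_eq_one h3
  exact ⟨ζ ^ i, by rw [← hi, ← pow_mul, ← pow_mul, mul_comm]⟩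

/-- The number of elements in a level set. -/
def herA (F : Type*) [Field F] [Fintype F] [DecidableEq F] (Q s : ℕ) (c : F) : ℕ :=
  (Finset.univ.filter (fun x : F => herL Q s (x ^ (Q + 1)) = c)).card

theorem herA_le [Fintype F] [DecidableEq F] {Q s : ℕ} (hQ : 2 ≤ Q)
    (hcard : Fintype.card F = Q ^ (2 * s)) (c c' : F) (hc : c ^ Q = -c) (hc' : c' ^ Q = -c')
    (h0 : c ≠ 0) (h0' : c' ≠ 0) : herA F Q s c ≤ herA F Q s c' := by
  obtain ⟨a, ha⟩ := her_norm hQ hcard (c' / c) (div_ne_zero h0' h0) (by rw [div_pow, hc, hc', neg_div_neg_eq])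
  have ha0 : a ≠ 0 := by
    rintro rfl
    rw [zero_pow (by omega)] at ha
    exact div_ne_zero h0' h0 ha.symm
  refine Finset.card_le_card_of_injOn (fun x => a * x) ?_ ?_
  · intro x hx
    simp only [Finset.coe_filter, Finset.mem_univ, true_and, Set.mem_ofPred_eq] at hx ⊢
    rw [mul_pow, herL_smul _ _, hx, ha, div_mul_cancel₀ _ h0]
    rw [ha, div_pow, hc, hc', neg_div_neg_eq]
  · intro x _ y _ h
    exact mul_left_cancel₀ ha0 h

theorem herA_const [Fintype F] [DecidableEq F] {Q s : ℕ} (hQ : 2 ≤ Q)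
    (hcard : Fintype.card F = Q ^ (2 * s)) :
    ∃ B, ∀ c : F, c ^ Q = -c → c ≠ 0 → herA F Q s c = B := by
  by_cases h : ∃ c : F, c ^ Q = - c ∧ c ≠ 0
  · obtain ⟨c, hc, hc0⟩ := h
    exact ⟨herA F Q s c, fun c' hc' hc0' => le_antisymm (herA_le hQ hcard _ _ hc' hc hc0' hc0)
      (herA_le hQ hcard _ _ hc hc' hc0 hc0')⟩
  · exact ⟨0, fun c hc h0 => absurd ⟨c, hc, h0⟩ h⟩

theorem her_dvd_fib [Fintype F] [DecidableEq F] {n : ℕ} (hn0 : 0 < n)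
    (hn : n ∣ Fintype.card F - 1) (p : F → Prop) [DecidablePred p] :
    n ∣ (Finset.univ.filter (fun x : F => x ≠ 0 ∧ p (x ^ n))).card := by
  rw [Finset.card_eq_sum_card_image (fun x => x ^ n)]
  refine Finset.dvd_sum fun z hz => ?_
  obtain ⟨x, hx, rfl⟩ := Finset.mem_image.mp hz
  simp only [Finset.mem_filter, Finset.mem_univ, true_and] at hx
  have := her_fib n hn0 hn x hx.1
  rw [Finset.filter_filter]
  refine dvd_of_eq ?_
  rw [← this, this]
  conv_lhs => rw [← this]
  congr 1
  ext y
  simp only [Finset.mem_filter, Finset.mem_univ, true_and]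
  constructor
  · intro h
    refine ⟨⟨?_, by rw [h]; exact hx.2⟩, h⟩
    rintro rfl
    rw [zero_pow hn0.ne'] at h
    exact hx.1 (by simpa [hn0.ne'] using h.symm)
  · exact fun h => h.2

theorem herL_zero {Q s : ℕ} (hQ : 2 ≤ Q) : herL Q s (0 : F) = 0 :=
  herL_fix 0 (zero_pow (by omega))

theorem herA_mod [Fintype F] [DecidableEq F] {Q s : ℕ} (hQ : 2 ≤ Q)
    (hcard : Fintype.card F = Q ^ (2 * s)) :
    (∃ k, herA F Q s 0 = (Q + 1) * k + 1) ∧ ∀ c : F, c ≠ 0 → (Q + 1) ∣ herA F Q s c := by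
  have hd : Q + 1 ∣ Fintype.card F - 1 := by
    rw [hcard]; exact (Dvd.intro _ (her_sq Q).symm).trans (her_dvd Q s)
  constructor
  · obtain ⟨k, hk⟩ := her_dvd_fib (by omega) hd (fun z => herL Q s z = 0)
    refine ⟨k, ?_⟩
    rw [← hk, herA, ← Finset.card_insert_of_notMem (a := (0 : F)) (by simp)]
    congr 1
    ext x
    by_cases hx : x = 0
    · simp [hx, herL_zero hQ]
    · simp [hx]
  · intro c hc
    have := her_dvd_fib (by omega) hd (fun z => herL Q s z = c)
    refine this.trans (dvd_of_eq ?_)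
    rw [herA]
    congr 1
    ext x
    by_cases hx : x = 0
    · simp [hx, herL_zero hQ, hc.symm]
    · simp [hx]

/-- sum over levels -/
theorem herA_sum [Fintype F] [DecidableEq F] {Q s : ℕ}
    (hcard : Fintype.card F = Q ^ (2 * s)) (σ : F →+* F) (hσ : ∀ x, σ x = x ^ Q) :
    Q ^ (2 * s) = ∑ c ∈ Finset.univ.filter (fun y : F => y ^ Q + y = 0), herA F Q s c := by
  rw [← hcard, ← Finset.card_univ]
  exact Finset.card_eq_sum_card_fiberwise (f := fun x : F => herL Q s (x ^ (Q + 1))) (fun x _ => by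
    simp [pow_herL hcard σ hσ])

theorem herA_sq [Fintype F] [DecidableEq F] {Q s : ℕ}
    (hcard : Fintype.card F = Q ^ (2 * s)) (σ : F →+* F) (hσ : ∀ x, σ x = x ^ Q) :
    (Finset.univ.filter (fun z : F × F => herL Q s ((z.1 + z.2) ^ (Q + 1)) = herL Q s (z.1 ^ (Q + 1)))).card
    = ∑ c ∈ Finset.univ.filter (fun y : F => y ^ Q + y = 0), herA F Q s c ^ 2 := by
  rw [Finset.card_eq_sum_card_fiberwise (f := fun z : F × F => herL Q s (z.1 ^ (Q + 1)))
    (t := Finset.univ.filter (fun y : F => y ^ Q + y = 0)) (fun x _ => by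
    simp [pow_herL hcard σ hσ])]
  refine Finset.sum_congr rfl fun c _ => ?_
  rw [sq, herA, ← Finset.card_product]
  refine Finset.card_bij (fun z _ => (z.1, z.1 + z.2)) ?_ ?_ ?_
  · rintro ⟨x, u⟩ h
    simp only [Finset.mem_filter, Finset.mem_univ, true_and, Finset.mem_product] at h ⊢
    exact ⟨h.2, h.1.trans h.2⟩
  · rintro ⟨x, u⟩ _ ⟨x', u'⟩ _ h
    simp only [Prod.mk.injEq] at h ⊢
    obtain ⟨rfl, h⟩ := h
    exact ⟨rfl, add_left_cancel h⟩
  · rintro ⟨x, y⟩ h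
    simp only [Finset.mem_filter, Finset.mem_univ, true_and, Finset.mem_product] at h
    refine ⟨(x, y - x), ?_, by simp⟩
    simp [h.1, h.2]

theorem her_cross [Fintype F] {Q s : ℕ} (hs : 0 < s)
    (hcard : Fintype.card F = Q ^ (2 * s)) (σ : F →+* F) (hσ : ∀ x, σ x = x ^ Q) (x u : F) :
    herL Q s ((x + u) ^ (Q + 1)) = herL Q s (x ^ (Q + 1)) + herL Q s (u ^ (Q + 1)) +
      herL Q s ((u ^ Q - u ^ (Q ^ (2 * s - 1))) * x) := by
  have hz : (u ^ (Q ^ (2 * s - 1))) ^ Q = u := by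
    rw [← pow_mul, ← pow_succ, show 2 * s - 1 + 1 = 2 * s by omega, ← hcard]
    exact FiniteField.pow_card u
  have hneg : ∀ z : F, herL Q s (-z) = - herL Q s z := fun z => map_neg (herLHom Q s σ hσ) z
  have h1 : (x + u) ^ (Q + 1) = x ^ (Q + 1) + u ^ (Q + 1) + u ^ Q * x + (x * u ^ (Q ^ (2 * s - 1))) ^ Q := by
    rw [mul_pow, hz, pow_succ, ← hσ, map_add, hσ, hσ]; ring
  rw [h1, herL_add σ hσ, herL_add σ hσ, herL_add σ hσ, herL_pow hcard, sub_mul, sub_eq_add_neg,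
    herL_add σ hσ, hneg, mul_comm x]
  ring

theorem her_pairs [Fintype F] [DecidableEq F] {Q s : ℕ} (hQ : 2 ≤ Q) (hs : 0 < s)
    (hcard : Fintype.card F = Q ^ (2 * s)) (σ : F →+* F) (hσ : ∀ x, σ x = x ^ Q) :
    (Finset.univ.filter (fun z : F × F => herL Q s ((z.1 + z.2) ^ (Q + 1)) = herL Q s (z.1 ^ (Q + 1)))).card
    = Q ^ 2 * Q ^ (2 * s) + (Q ^ (2 * s) - Q ^ 2) * Q ^ (2 * s - 1) := by
  have hM := (her_main hQ hs hcard σ hσ).2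
  rw [Finset.card_eq_sum_card_fiberwise (f := fun z : F × F => z.2)
    (t := Finset.univ) (fun x _ => by simp)]
  have key : ∀ u : F, (Finset.filter (fun z : F × F => z.2 = u) (Finset.univ.filter (fun z : F × F => herL Q s ((z.1 + z.2) ^ (Q + 1)) = herL Q s (z.1 ^ (Q + 1))))).card
      = if u ^ (Q ^ 2) = u then Q ^ (2 * s) else Q ^ (2 * s - 1) := by
    intro u
    have h1 : (Finset.filter (fun z : F × F => z.2 = u) (Finset.univ.filter (fun z : F × F => herL Q s ((z.1 + z.2) ^ (Q + 1)) = herL Q s (z.1 ^ (Q + 1))))).card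
      = (Finset.univ.filter (fun x : F => herL Q s ((u ^ Q - u ^ (Q ^ (2 * s - 1))) * x) = - herL Q s (u ^ (Q + 1)))).card := by
      refine Finset.card_bij (fun z _ => z.1) ?_ ?_ ?_
      · rintro ⟨x, v⟩ h
        simp only [Finset.mem_filter, Finset.mem_univ, true_and] at h ⊢
        obtain ⟨h, rfl⟩ := h
        rw [her_cross hs hcard σ hσ] at h
        linear_combination h
      · rintro ⟨x, v⟩ h ⟨x', v'⟩ h' e
        simp only [Finset.mem_filter, Finset.mem_univ, true_and] at h h' e ⊢
        rw [e, h.2, h'.2]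
      · intro x h
        simp only [Finset.mem_filter, Finset.mem_univ, true_and] at h
        refine ⟨(x, u), ?_, rfl⟩
        simp only [Finset.mem_filter, Finset.mem_univ, true_and, and_true]
        rw [her_cross hs hcard σ hσ]
        linear_combination h
    rw [h1]
    have hz : (u ^ (Q ^ (2 * s - 1))) ^ Q = u := by
      rw [← pow_mul, ← pow_succ, show 2 * s - 1 + 1 = 2 * s by omega, ← hcard]
      exact FiniteField.pow_card u
    have hiff : u ^ Q = u ^ (Q ^ (2 * s - 1)) ↔ u ^ (Q ^ 2) = u := by
      rw [← σ.injective.eq_iff, hσ, hσ, hz, ← pow_mul, sq]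
    split_ifs with hu
    · have hu2 : herL Q s (u ^ (Q + 1)) = 0 := by
        apply herL_fix
        rw [← pow_mul, add_mul, ← sq, one_mul, pow_add, hu, pow_succ, mul_comm]
      rw [hiff.mpr hu, sub_self, hu2]
      simp [herL_zero hQ, hcard]
    · have hw : u ^ Q - u ^ (Q ^ (2 * s - 1)) ≠ 0 := by
        rw [sub_ne_zero]; exact fun h => hu (hiff.mp h)
      refine Eq.trans ?_ (hM (- herL Q s (u ^ (Q + 1))) ?_)
      · refine Finset.card_bij (fun x _ => (u ^ Q - u ^ (Q ^ (2 * s - 1))) * x) ?_ ?_ ?_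
        · intro x h; simpa using h
        · intro x _ y _ h; exact mul_left_cancel₀ hw h
        · intro y h
          refine ⟨y / (u ^ Q - u ^ (Q ^ (2 * s - 1))), ?_, mul_div_cancel₀ _ hw⟩
          simpa [mul_div_cancel₀ _ hw] using h
      · rw [← hσ, map_neg, hσ, pow_herL hcard σ hσ]
  rw [Finset.sum_congr rfl (fun u _ => key u), Finset.sum_ite]
  simp only [Finset.sum_const, smul_eq_mul]
  rw [her_fixcard hQ hcard]
  congr 2
  have := Finset.card_filter_add_card_filter_not (s := (Finset.univ : Finset F)) (fun u : F => u ^ (Q ^ 2) = u)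
  rw [her_fixcard hQ hcard, Finset.card_univ, hcard] at this
  omega
end

section
variable {F : Type*} [Field F]

theorem her_arith (Q s : ℕ) (hQ : 2 ≤ Q) (hs : 0 < s) (A B : ℕ)
    (h1 : Q ^ (2 * s) = A + (Q - 1) * B)
    (h2 : A ^ 2 + (Q - 1) * B ^ 2 = Q ^ 2 * Q ^ (2 * s) + (Q ^ (2 * s) - Q ^ 2) * Q ^ (2 * s - 1))
    (k l : ℕ) (hA : A = (Q + 1) * k + 1) (hB : B = (Q + 1) * l) :
    (Odd s → Q ^ (2 * s) + Q * (Q - 1) * Q ^ s = Q * A) ∧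
    (Even s → Q = 2 → Q ^ (2 * s) + Q * (Q - 1) * Q ^ s = Q * B) := by
  obtain ⟨P, rfl⟩ : ∃ P, Q = P + 1 := ⟨Q - 1, by omega⟩
  simp only [Nat.add_sub_cancel] at *
  have hle : (P + 1) ^ 2 ≤ (P + 1) ^ (2 * s) := Nat.pow_le_pow_right (by omega) (by omega)
  have hpp : (P + 1) ^ (2 * s) = (P + 1) * (P + 1) ^ (2 * s - 1) := by
    rw [← pow_succ']; congr 1; omega
  zify [hle] at h1 h2 hpp
  set S : ℤ := A - B with hS
  have hA' : (A : ℤ) = S + B := by omega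
  have hPpos : (0 : ℤ) < P := by omega
  have hsq : S ^ 2 = (((P : ℤ) + 1) ^ (s + 1)) ^ 2 := by
    have e1 : (((P : ℤ) + 1) ^ (s + 1)) ^ 2 = ((P : ℤ) + 1) ^ 2 * ((P : ℤ) + 1) ^ (2 * s) := by
      rw [← pow_mul, ← pow_add]; congr 1; ring
    rw [e1]
    generalize ((P : ℤ) + 1) ^ (2 * s - 1) = r at *
    generalize ((P : ℤ) + 1) ^ (2 * s) = q at *
    rw [hA'] at h1 h2
    have : (P : ℤ) * S ^ 2 = P * (((P : ℤ) + 1) ^ 2 * q) := by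
      have h2' := congrArg (fun z => ((P : ℤ) + 1) * z) h2
      have e3 : q = S + (P + 1) * B := by rw [h1]; ring
      have e4 : ((P : ℤ) + 1) * ((q - (P + 1) ^ 2) * r) = (q - (P + 1) ^ 2) * q := by
        conv_rhs => rw [hpp]
        rw [hpp]; ring
      have e5 : ((P : ℤ) + 1) * ((S + B) ^ 2 + P * B ^ 2) = P * S ^ 2 + q ^ 2 := by
        rw [e3]; ring
      rw [e5, mul_add, e4] at h2'
      linear_combination h2'
    exact mul_left_cancel₀ hPpos.ne' this
  have hmod : ((P : ℤ) + 2) ∣ S - 1 := ⟨k - l, by rw [hS, hA, hB]; push_cast; ring⟩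
  have hm1 : ((P : ℤ) + 2) ∣ ((P : ℤ) + 1) ^ (s + 1) - (-1) ^ (s + 1) := by
    refine Dvd.dvd.trans ?_ (sub_dvd_pow_sub_pow ((P : ℤ) + 1) (-1) (s + 1))
    exact ⟨1, by ring⟩
  have hno : ¬ ((P : ℤ) + 2) ∣ 2 := by
    intro h
    have := Int.le_of_dvd (by norm_num) h
    omega
  have hSS : ∀ ε : ℤ, (-1) ^ (s + 1) = ε → ε ^ 2 = 1 → S = ε * ((P : ℤ) + 1) ^ (s + 1) := by
    intro ε he he2
    rw [he] at hm1
    have hε : ε = 1 ∨ ε = -1 := by simpa using he2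
    rcases sq_eq_sq_iff_eq_or_eq_neg.mp hsq with h | h <;> rcases hε with rfl | rfl
    · rw [h]; ring
    · exfalso; apply hno
      have := dvd_sub hm1 hmod
      rw [h] at this; ring_nf at this ⊢; exact this
    · exfalso; apply hno
      have := dvd_add hm1 hmod
      rw [h] at this; ring_nf at this ⊢; simpa using (dvd_neg.mpr this)
    · rw [h]; ring
  constructor
  · intro ho
    have := hSS 1 (Even.neg_one_pow ho.add_one) (by norm_num)
    zify
    rw [h1]
    rw [hA'] at *
    rw [this]
    ring
  · intro he h2
    obtain rfl : P = 1 := by omega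
    have := hSS (-1) (Odd.neg_one_pow he.add_one) (by norm_num)
    zify
    push_cast at h1 this
    rw [one_add_one_eq_two, h1, hA', this]
    ring

theorem her_count [Fintype F] [DecidableEq F] {Q s : ℕ} (hQ : 2 ≤ Q) (hs : 0 < s)
    (hcase : Odd s ∨ Q = 2)
    (hcard : Fintype.card F = Q ^ (2 * s)) (σ : F →+* F) (hσ : ∀ x, σ x = x ^ Q) :
    ∃ b : F, Q ^ (2 * s) + Q * (Q - 1) * Q ^ s =
      (Finset.univ.filter (fun z : F × F => z.2 ^ Q + z.2 = z.1 ^ (Q + 1) + b)).card := by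
  obtain ⟨hM1, hM2⟩ := her_main hQ hs hcard σ hσ
  have hW : (Finset.univ.filter (fun y : F => y ^ Q + y = 0)).card = Q := hM1 0 (herL_zero hQ)
  obtain ⟨c0, hc0, hc00⟩ : ∃ c : F, c ^ Q = -c ∧ c ≠ 0 := by
    have : 1 < (Finset.univ.filter (fun y : F => y ^ Q + y = 0)).card := by omega
    obtain ⟨c, hc, h0⟩ := Finset.exists_mem_ne this 0
    refine ⟨c, ?_, h0⟩
    simp only [Finset.mem_filter, Finset.mem_univ, true_and] at hc
    linear_combination hc
  obtain ⟨B, hB⟩ := herA_const (F := F) (s := s) hQ hcard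
  have hmem : (0 : F) ∈ Finset.univ.filter (fun y : F => y ^ Q + y = 0) := by
    simp; omega
  have hcr : ((Finset.univ.filter (fun y : F => y ^ Q + y = 0)).erase 0).card = Q - 1 := by
    rw [Finset.card_erase_of_mem hmem, hW]
  have hBe : ∀ c ∈ (Finset.univ.filter (fun y : F => y ^ Q + y = 0)).erase 0, herA F Q s c = B := by
    intro c hc
    simp only [Finset.mem_erase, Finset.mem_filter, Finset.mem_univ, true_and] at hc
    exact hB c (by linear_combination hc.2) hc.1
  have h1 := herA_sum hcard σ hσ
  have h2 := herA_sq hcard σ hσ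
  rw [her_pairs hQ hs hcard σ hσ, ← Finset.add_sum_erase _ _ hmem,
    Finset.sum_congr rfl (fun c hc => by rw [hBe c hc]), Finset.sum_const, smul_eq_mul, hcr] at h2
  rw [← Finset.add_sum_erase _ _ hmem,
    Finset.sum_congr rfl hBe, Finset.sum_const, smul_eq_mul, hcr] at h1
  obtain ⟨⟨k, hk⟩, hl⟩ := herA_mod (F := F) (s := s) hQ hcard
  obtain ⟨l, hl⟩ := hl c0 hc00
  rw [hB c0 hc0 hc00] at hl
  have harith := her_arith Q s hQ hs _ B h1 h2.symm k l hk hl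
  have hneg : ∀ z : F, herL Q s (-z) = - herL Q s z := fun z => map_neg (herLHom Q s σ hσ) z
  have hN : ∀ b : F, (Finset.univ.filter (fun z : F × F => z.2 ^ Q + z.2 = z.1 ^ (Q + 1) + b)).card =
      Q * herA F Q s (- herL Q s b) := by
    intro b
    rw [Finset.card_eq_sum_card_fiberwise (f := fun z : F × F => z.1)
      (t := Finset.univ) (fun x _ => by simp)]
    have key : ∀ x : F, (Finset.filter (fun z : F × F => z.1 = x) (Finset.univ.filter (fun z : F × F => z.2 ^ Q + z.2 = z.1 ^ (Q + 1) + b))).card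
        = if herL Q s (x ^ (Q + 1)) = - herL Q s b then Q else 0 := by
      intro x
      have e : (Finset.filter (fun z : F × F => z.1 = x) (Finset.univ.filter (fun z : F × F => z.2 ^ Q + z.2 = z.1 ^ (Q + 1) + b))).card =
        (Finset.univ.filter (fun y : F => y ^ Q + y = x ^ (Q + 1) + b)).card := by
        refine Finset.card_bij (fun z _ => z.2) ?_ ?_ ?_
        · rintro ⟨x', y⟩ h
          simp only [Finset.mem_filter, Finset.mem_univ, true_and] at h ⊢
          obtain ⟨h, rfl⟩ := h
          exact h
        · rintro ⟨x, v⟩ h ⟨x', v'⟩ h' e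
          simp only [Finset.mem_filter, Finset.mem_univ, true_and] at h h' e ⊢
          rw [e, h.2, h'.2]
        · intro y h
          exact ⟨(x, y), by simpa using h, rfl⟩
      rw [e]
      split_ifs with hx
      · exact hM1 _ (by rw [herL_add σ hσ, hx]; ring)
      · rw [Finset.card_eq_zero, Finset.filter_eq_empty_iff]
        intro y _ hy
        apply hx
        have := congrArg (herL Q s) hy
        rw [herL_add σ hσ, herL_add σ hσ, herL_pow hcard] at this
        linear_combination -this
    rw [Finset.sum_congr rfl (fun u _ => key u), Finset.sum_ite]
    simp [herA, mul_comm]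
  by_cases ho : Odd s
  · refine ⟨0, ?_⟩
    rw [hN, herL_zero hQ, neg_zero]
    exact harith.1 ho
  · have hQ2 : Q = 2 := hcase.resolve_left ho
    obtain ⟨b, hb⟩ : ∃ b : F, herL Q s b = c0 := by
      have : 0 < (Finset.univ.filter (fun y : F => herL Q s y = c0)).card := by
        rw [hM2 c0 hc0]; positivity
      obtain ⟨b, hb⟩ := Finset.card_pos.mp this
      exact ⟨b, by simpa using hb⟩
    refine ⟨-b, ?_⟩
    rw [hN, hneg, hb, neg_neg, hB c0 hc0 hc00]
    exact harith.2 (Nat.not_odd_iff_even.mp ho) hQ2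

theorem her_points [Fintype F] [DecidableEq F] {Q s : ℕ} (hQ : 2 ≤ Q) (hs : 0 < s)
    (hcase : Odd s ∨ Q = 2)
    (hcard : Fintype.card F = Q ^ (2 * s)) (σ : F →+* F) (hσ : ∀ x, σ x = x ^ Q)
    (m : ℕ) (hm : m ≤ (Q ^ (2 * s) + Q * (Q - 1) * Q ^ s) / (Q + 1)) :
    ∃ (b : F) (yv : Fin m → F) (xv : Fin m → Fin (Q + 1) → F), Function.Injective yv ∧
      (∀ i, Function.Injective (xv i)) ∧
      ∀ i j, xv i j ^ (Q + 1) = yv i ^ Q + yv i - b := by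
  obtain ⟨b, hb⟩ := her_count hQ hs hcase hcard σ hσ
  rw [hb, Nat.le_div_iff_mul_le (by omega)] at hm
  have hd : Q + 1 ∣ Fintype.card F - 1 := by
    rw [hcard]; exact (Dvd.intro _ (her_sq Q).symm).trans (her_dvd Q s)
  set Y : Finset F := Finset.univ.filter (fun y : F => ∃ x : F, x ≠ 0 ∧ x ^ (Q + 1) = y ^ Q + y - b) with hY
  have hfib : ∀ y ∈ Y, (Finset.univ.filter (fun x : F => x ^ (Q + 1) = y ^ Q + y - b)).card = Q + 1 := by
    intro y hy
    simp only [hY, Finset.mem_filter, Finset.mem_univ, true_and] at hy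
    obtain ⟨x, hx0, hx⟩ := hy
    rw [← hx]
    exact her_fib _ (by omega) hd x hx0
  have hle : (Finset.univ.filter (fun z : F × F => z.2 ^ Q + z.2 = z.1 ^ (Q + 1) + b)).card ≤
      Y.card * (Q + 1) + Q := by
    have hsub : (Finset.univ.filter (fun z : F × F => z.2 ^ Q + z.2 = z.1 ^ (Q + 1) + b)) ⊆
      (Y.sigma (fun y => Finset.univ.filter (fun x : F => x ^ (Q + 1) = y ^ Q + y - b))).image (fun w => (w.2, w.1)) ∪
      (Finset.univ.filter (fun y : F => y ^ Q + y = b)).image (fun y => ((0 : F), y)) := by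
      rintro ⟨x, y⟩ h
      simp only [Finset.mem_filter, Finset.mem_univ, true_and] at h
      rw [Finset.mem_union]
      by_cases hx : x = 0
      · right
        subst hx
        rw [zero_pow (by omega), zero_add] at h
        exact Finset.mem_image.mpr ⟨y, by simpa using h, rfl⟩
      · left
        have h' : x ^ (Q + 1) = y ^ Q + y - b := by linear_combination -h
        refine Finset.mem_image.mpr ⟨⟨y, x⟩, ?_, rfl⟩
        rw [Finset.mem_sigma]
        exact ⟨by simpa [hY] using ⟨x, hx, h'⟩, by simpa using h'⟩
    refine (Finset.card_le_card hsub).trans ((Finset.card_union_le _ _).trans ?_)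
    refine Nat.add_le_add (Finset.card_image_le.trans ?_) (Finset.card_image_le.trans (her_card_ker_phi_le hQ b))
    rw [Finset.card_sigma, Finset.sum_congr rfl hfib, Finset.sum_const, smul_eq_mul]
  have hmY : m ≤ Y.card := by
    by_contra h
    have : Y.card + 1 ≤ m := by omega
    have := Nat.mul_le_mul_right (Q + 1) this
    rw [add_mul] at this
    omega
  have hmY' : Fintype.card (Fin m) ≤ Fintype.card Y := by simpa using hmY
  obtain ⟨f⟩ := Function.Embedding.nonempty_of_card_le hmY'
  have hx : ∀ i : Fin m, ∃ g : Fin (Q + 1) → F, Function.Injective g ∧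
      ∀ j, g j ^ (Q + 1) = (f i : F) ^ Q + f i - b := by
    intro i
    have h := hfib (f i) (f i).2
    let e := (Finset.equivFinOfCardEq h).symm
    refine ⟨fun j => e j, fun a a' haa => e.injective (Subtype.ext haa), fun j => ?_⟩
    have := (e j).2
    rw [Finset.mem_filter] at this
    exact this.2
  choose g hg1 hg2 using hx
  exact ⟨b, fun i => f i, g, fun a a' haa => f.injective (Subtype.ext haa), hg1, hg2⟩
end

section
variable {F : Type*} [Field F]
open Polynomial

theorem her_zeros [DecidableEq F] {Q m t : ℕ} (hQ : 2 ≤ Q) (b : F) (yv : Fin m → F)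
    (xv : Fin m → Fin (Q + 1) → F) (hy : Function.Injective yv)
    (hx : ∀ i, Function.Injective (xv i))
    (hxy : ∀ i j, xv i j ^ (Q + 1) = yv i ^ Q + yv i - b)
    (p0 p1 : F[X]) (h0 : p0.degree < ((t + 1 : ℕ) : WithBot ℕ)) (h1 : p1.degree < (t : WithBot ℕ))
    (hne : ¬ (p0 = 0 ∧ p1 = 0)) :
    (Finset.univ.filter (fun z : Fin m × Fin (Q + 1) =>
      p0.eval (yv z.1) + xv z.1 z.2 * p1.eval (yv z.1) = 0)).card ≤ t * (Q + 1) := by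
  set G : F[X] := X ^ Q + X - C b with hG
  have hGd : G.natDegree = Q := by
    rw [hG]
    compute_degree! <;> try omega
    · simp [show 1 ≠ Q by omega, show Q ≠ 0 by omega]
  have hG0 : G ≠ 0 := by rintro h; rw [h] at hGd; simp at hGd; omega
  set ε : F := (-1) ^ (Q + 1) with hε
  have hε0 : ε ≠ 0 := pow_ne_zero _ (by simp)
  set N : F[X] := p0 ^ (Q + 1) - C ε * G * p1 ^ (Q + 1) with hN
  have hd0 : p0.natDegree ≤ t := by
    by_cases h : p0 = 0
    · simp [h]
    · have := (natDegree_lt_iff_degree_lt h).mpr h0; omega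
  have hd1 : (C ε * G * p1 ^ (Q + 1)).natDegree ≤ t * (Q + 1) := by
    by_cases h : p1 = 0
    · simp [h]
    · have h' := (natDegree_lt_iff_degree_lt h).mpr h1
      rw [natDegree_mul (by simp [hε0, hG0]) (pow_ne_zero _ h), natDegree_C_mul hε0, hGd, natDegree_pow]
      nlinarith
  have hNd : N.natDegree ≤ t * (Q + 1) := by
    refine (natDegree_sub_le _ _).trans (max_le ?_ hd1)
    rw [natDegree_pow, mul_comm]
    exact Nat.mul_le_mul_right _ hd0
  have hN0 : N ≠ 0 := by
    intro h
    rw [hN, sub_eq_zero] at h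
    by_cases hp1 : p1 = 0
    · rw [hp1, zero_pow (by omega), mul_zero] at h
      exact hne ⟨pow_eq_zero_iff (by omega) |>.mp h, hp1⟩
    · have := congrArg natDegree h
      rw [natDegree_mul (by simp [hε0, hG0]) (pow_ne_zero _ hp1), natDegree_C_mul hε0, hGd, natDegree_pow, natDegree_pow] at this
      have := congrArg (· % (Q + 1)) this
      simp at this
      omega
  have hfib : ∀ i, (Finset.univ.filter (fun j : Fin (Q + 1) =>
      p0.eval (yv i) + xv i j * p1.eval (yv i) = 0)).card ≤ N.roots.count (yv i) := by
    intro i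
    rw [count_roots]
    by_cases hc : p1.eval (yv i) = 0
    · by_cases hc0 : p0.eval (yv i) = 0
      · refine (Finset.card_le_univ _).trans ?_
        rw [Fintype.card_fin, le_rootMultiplicity_iff hN0]
        refine dvd_sub ?_ (Dvd.dvd.mul_left ?_ _)
        · exact pow_dvd_pow_of_dvd (dvd_iff_isRoot.mpr hc0) _
        · exact pow_dvd_pow_of_dvd (dvd_iff_isRoot.mpr hc) _
      · simp [hc, hc0]
    · rcases Finset.eq_empty_or_nonempty (Finset.univ.filter (fun j : Fin (Q + 1) =>
        p0.eval (yv i) + xv i j * p1.eval (yv i) = 0)) with h | ⟨j, hj⟩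
      · rw [h]; simp
      · have hle : (Finset.univ.filter (fun j : Fin (Q + 1) =>
          p0.eval (yv i) + xv i j * p1.eval (yv i) = 0)).card ≤ 1 := by
          rw [Finset.card_le_one]
          intro a ha a' ha'
          simp only [Finset.mem_filter, Finset.mem_univ, true_and] at ha ha'
          apply hx i
          apply mul_right_cancel₀ hc
          linear_combination ha - ha'
        refine hle.trans ?_
        rw [Nat.one_le_iff_ne_zero, ← Nat.pos_iff_ne_zero, rootMultiplicity_pos hN0, IsRoot.def]
        simp only [Finset.mem_filter, Finset.mem_univ, true_and] at hj
        have hj' : p0.eval (yv i) = (-1) * xv i j * p1.eval (yv i) := by linear_combination hj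
        simp only [hN, hG, eval_sub, eval_pow, eval_mul, eval_C, eval_add, eval_X]
        rw [hj', mul_pow, mul_pow, hxy]; ring
  rw [Finset.card_eq_sum_card_fiberwise (f := fun z => z.1) (t := Finset.univ) (fun x _ => by simp)]
  calc _ ≤ ∑ i, N.roots.count (yv i) := by
        refine Finset.sum_le_sum fun i _ => le_trans ?_ (hfib i)
        refine Finset.card_le_card_of_injOn (fun z => z.2) ?_ ?_
        · rintro ⟨i', j⟩ h
          simp only [Finset.coe_filter, Finset.mem_filter, Finset.mem_univ, true_and, Set.mem_ofPred_eq] at h ⊢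
          obtain ⟨h, rfl⟩ := h
          exact h
        · rintro ⟨i1, j⟩ h ⟨i2, j'⟩ h' e
          simp only [Finset.coe_filter, Finset.mem_filter, Finset.mem_univ, true_and, Set.mem_ofPred_eq] at h h' e ⊢
          rw [e, h.2, h'.2]
    _ = ∑ y ∈ Finset.univ.image yv, N.roots.count y := by
        rw [Finset.sum_image (fun a _ a' _ h => hy h)]
    _ ≤ ∑ y ∈ Finset.univ.image yv ∪ N.roots.toFinset, N.roots.count y :=
        Finset.sum_le_sum_of_subset Finset.subset_union_left
    _ = N.roots.card := Multiset.sum_count_eq_card (fun a ha => by simp [Multiset.mem_toFinset.mpr ha, Finset.mem_union] at ha ⊢)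
    _ ≤ _ := (card_roots' _).trans hNd

def herEv {n m Q : ℕ} (e : Fin n ≃ Fin m × Fin (Q + 1)) (yv : Fin m → F)
    (xv : Fin m → Fin (Q + 1) → F) (t : ℕ) :
    (degreeLT F (t + 1) × degreeLT F t) →ₗ[F] (Fin n → F) where
  toFun p i := (p.1 : F[X]).eval (yv (e i).1) + xv (e i).1 (e i).2 * (p.2 : F[X]).eval (yv (e i).1)
  map_add' p p' := by ext i; simp; ring
  map_smul' c p := by ext i; simp; ring

theorem her_code [DecidableEq F] {Q m t : ℕ} (hQ : 2 ≤ Q) (htm : t < m) (b : F) (yv : Fin m → F)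
    (xv : Fin m → Fin (Q + 1) → F) (hy : Function.Injective yv)
    (hx : ∀ i, Function.Injective (xv i))
    (hxy : ∀ i j, xv i j ^ (Q + 1) = yv i ^ Q + yv i - b) :
    ExistsOptimalLRC F (m * (Q + 1)) (2 * t + 1) ((m - t) * (Q + 1)) 2 Q := by
  let e : Fin (m * (Q + 1)) ≃ Fin m × Fin (Q + 1) := finProdFinEquiv.symm
  set E := herEv e yv xv t with hE
  have hEv : ∀ p i, E p i = (p.1 : F[X]).eval (yv (e i).1) + xv (e i).1 (e i).2 * (p.2 : F[X]).eval (yv (e i).1) :=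
    fun p i => rfl
  have hwt : ∀ p, hammingWt (E p) + (Finset.univ.filter (fun z : Fin m × Fin (Q + 1) =>
      (p.1 : F[X]).eval (yv z.1) + xv z.1 z.2 * (p.2 : F[X]).eval (yv z.1) = 0)).card = m * (Q + 1) := by
    intro p
    have h1 : (Finset.univ.filter (fun z : Fin m × Fin (Q + 1) =>
      (p.1 : F[X]).eval (yv z.1) + xv z.1 z.2 * (p.2 : F[X]).eval (yv z.1) = 0)).card =
      (Finset.univ.filter (fun i => E p i = 0)).card := by
      symm
      refine Finset.card_bij (fun i _ => e i) ?_ ?_ ?_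
      · intro i h; simpa [hEv] using h
      · intro i _ j _ h; exact e.injective h
      · intro z h
        exact ⟨e.symm z, by simpa [hEv] using h, by simp⟩
    have := Finset.card_filter_add_card_filter_not (s := (Finset.univ : Finset (Fin (m * (Q + 1))))) (fun i => E p i = 0)
    rw [Finset.card_univ, Fintype.card_fin] at this
    rw [h1, hammingWt, add_comm]
    exact this
  have hsub : (m - t) * (Q + 1) = m * (Q + 1) - t * (Q + 1) := Nat.sub_mul _ _ _
  have hlt : t * (Q + 1) < m * (Q + 1) := Nat.mul_lt_mul_of_pos_right htm (by omega)
  have hge : ∀ p, p ≠ 0 → (m - t) * (Q + 1) ≤ hammingWt (E p) := by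
    intro p hp
    have hz := her_zeros (t := t) hQ b yv xv hy hx hxy p.1 p.2 (mem_degreeLT.mp p.1.2) (mem_degreeLT.mp p.2.2)
      (by
        rintro ⟨h1, h2⟩
        exact hp (Prod.ext (Subtype.ext h1) (Subtype.ext h2)))
    have := hwt p
    omega
  have hinj : Function.Injective E := by
    rw [injective_iff_map_eq_zero]
    intro p hp
    by_contra h
    have := hge p h
    rw [hp] at this
    simp [hammingWt] at this
    omega
  refine ⟨LinearMap.range E, ?_, ⟨?_, ?_⟩, ?_, ?_⟩
  · rw [LinearMap.finrank_range_of_inj hinj, Module.finrank_prod, (degreeLTEquiv F _).finrank_eq,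
      (degreeLTEquiv F _).finrank_eq]
    simp; ring
  · rintro _ ⟨p, rfl⟩ hne
    exact hge p (by rintro rfl; simp at hne)
  · set P : F[X] := ∏ i : Fin t, (X - C (yv (Fin.castLE htm.le i))) with hP
    have hPm : P.Monic := monic_prod_of_monic _ _ (fun i _ => monic_X_sub_C _)
    have hPd : P.natDegree = t := by
      rw [hP, natDegree_prod_of_monic _ _ (fun i _ => monic_X_sub_C _)]; simp
    have hPmem : P ∈ degreeLT F (t + 1) := by
      rw [mem_degreeLT]
      exact (natDegree_lt_iff_degree_lt hPm.ne_zero).mp (by omega)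
    set p : degreeLT F (t + 1) × degreeLT F t := (⟨P, hPmem⟩, 0) with hp
    have hp0 : p ≠ 0 := by
      intro h
      have := congrArg (fun z => (z.1 : F[X])) h
      exact hPm.ne_zero this
    refine ⟨E p, ⟨p, rfl⟩, fun h => hp0 (hinj (by rw [h, map_zero])), ?_⟩
    refine le_antisymm ?_ (hge p hp0)
    have h1 := hwt p
    have h2 : t * (Q + 1) ≤ (Finset.univ.filter (fun z : Fin m × Fin (Q + 1) =>
      (p.1 : F[X]).eval (yv z.1) + xv z.1 z.2 * (p.2 : F[X]).eval (yv z.1) = 0)).card := by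
      have : (Finset.univ : Finset (Fin t × Fin (Q + 1))).card = t * (Q + 1) := by simp
      rw [← this]
      refine Finset.card_le_card_of_injOn (fun z => (Fin.castLE htm.le z.1, z.2)) ?_ ?_
      · rintro ⟨i, j⟩ _
        simp only [Finset.coe_filter, Finset.mem_univ, true_and, Set.mem_ofPred_eq, hp]
        have : P.eval (yv (Fin.castLE htm.le i)) = 0 := by
          rw [hP, eval_prod]
          exact Finset.prod_eq_zero (Finset.mem_univ i) (by simp)
        rw [this]; simp
      · rintro ⟨i, j⟩ _ ⟨i', j'⟩ _ h
        simpa using h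
    omega
  · intro i
    refine ⟨Finset.univ.image (fun j => e.symm ((e i).1, j)), ?_, ?_, ?_⟩
    · exact Finset.mem_image.mpr ⟨(e i).2, Finset.mem_univ _, by simp⟩
    · refine Finset.card_image_le.trans ?_
      simp
      try omega
    · rintro _ ⟨p, rfl⟩ ⟨k, hk, hne⟩
      set R := Finset.univ.image (fun j => e.symm ((e i).1, j)) with hR
      have hRc : R.card = Q + 1 := by
        rw [hR, Finset.card_image_of_injective]
        · simp
        · intro a a' h
          simpa using h
      have hRe : ∀ k ∈ R, (e k).1 = (e i).1 := by
        intro k hk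
        obtain ⟨j, _, rfl⟩ := Finset.mem_image.mp hk
        simp
      have hle : (R.filter (fun j => E p j = 0)).card ≤ 1 := by
        rw [Finset.card_le_one]
        intro a ha a' ha'
        simp only [Finset.mem_filter] at ha ha'
        obtain ⟨ha, haz⟩ := ha
        obtain ⟨ha', haz'⟩ := ha'
        rw [hEv, hRe _ ha] at haz
        rw [hEv, hRe _ ha'] at haz'
        rw [hEv, hRe _ hk] at hne
        have hc : (p.2 : F[X]).eval (yv (e i).1) ≠ 0 := by
          intro h
          rw [h] at haz hne
          apply hne
          linear_combination haz
        apply e.injective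
        refine Prod.ext ((hRe _ ha).trans (hRe _ ha').symm) ?_
        apply hx (e i).1
        apply mul_right_cancel₀ hc
        linear_combination haz - haz'
      have := Finset.card_filter_add_card_filter_not (s := R) (fun j => E p j = 0)
      rw [hRc] at this
      have h3 : (R.filter (fun j => E p j ≠ 0)).card = (R.filter (fun j => ¬ E p j = 0)).card := rfl
      omega
  · unfold SingletonOptimal
    have : (2 * t + 1 + 2 - 1) / 2 = t + 1 := by omega
    rw [this]
    push_cast [Nat.cast_sub htm.le]
    ring
end

/-- Let `Q` be a prime power, `s` a positive integer which is odd
(or, alternatively, `Q = 2`), and `q = Q^(2s)`. For all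
`1 ≤ t < m ≤ ⌊(q + Q(Q-1)Q^s)/(Q+1)⌋`, there exists an optimal `(2, Q)`-LRC with
parameters `[m(Q+1), 2t+1, (m-t)(Q+1)]_q`. -/
theorem stmt_14 (Q : ℕ) (hQ : IsPrimePow Q)
    (s : ℕ) (hs : 0 < s) (hcase : Odd s ∨ Q = 2)
    (q : ℕ) (hq : q = Q ^ (2 * s))
    (t m : ℕ) (ht : 1 ≤ t) (htm : t < m)
    (hm : m ≤ (q + Q * (Q - 1) * Q ^ s) / (Q + 1))
    (F : Type*) [Field F] [Fintype F] [DecidableEq F] (hF : Fintype.card F = q) :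
    ExistsOptimalLRC F (m * (Q + 1)) (2 * t + 1) ((m - t) * (Q + 1)) 2 Q := by
  subst hq
  obtain ⟨p, k, hp, hk, rfl⟩ := hQ
  have hp' : p.Prime := hp.nat_prime
  haveI : Fact p.Prime := ⟨hp'⟩
  have hQ2 : 2 ≤ p ^ k := le_trans hp'.two_le (Nat.le_self_pow hk.ne' p)
  haveI : CharP F p := by
    obtain ⟨n, hpr, hn⟩ := FiniteField.card F (ringChar F)
    rw [hF, ← pow_mul] at hn
    have h1 : ringChar F ∣ p ^ (k * (2 * s)) := by
      rw [hn]; exact dvd_pow_self _ n.ne_zero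
    have h2 := (Nat.prime_dvd_prime_iff_eq hpr hp').mp (hpr.dvd_of_dvd_pow h1)
    exact ringChar.of_eq h2
  obtain ⟨b, yv, xv, hy, hx, hxy⟩ := her_points hQ2 hs hcase hF (iterateFrobenius F p k)
    (fun x => iterateFrobenius_def p k x) m hm
  exact her_code hQ2 htm b yv xv hy hx hxy
end

section
/- Let Q be a prime power, let b be a positive divisor of Q+1, let s be an odd positive integer, and let q = Q^{2s}. Then the number of pairs (α, β) ∈ F_q × F_q satisfying β^{(Q+1)/b} = α^{Q} + α equals q + ((Q+1)/b − 1)(Q−1)Q^{s}; that is, the superelliptic curve y^{(Q+1)/b} = x^{Q} + x is a maximal curve over F_q, attaining the Hasse–Weil upper bound q + 1 + 2g√q with genus g = ((Q+1)/b − 1)(Q−1)/2 (the curve has exactly one rational point at infinity). -/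
namespace Stmt17

open Finset

lemma exists_char (p k : ℕ) [Fact p.Prime] (F : Type*) [Field F] [Fintype F] [CharP F p] :
    ∃ ψ : AddChar F ℂ, ψ.IsPrimitive ∧ ∀ x, ψ (x ^ (p ^ k)) = ψ x := by
  obtain rfl : p = ringChar F := (ringChar.eq F p).symm
  let _ : Algebra (ZMod (ringChar F)) F := ZMod.algebra F (ringChar F)
  have : NeZero (ringChar F) := ⟨(Fact.out : (ringChar F).Prime).ne_zero⟩
  let ψ : AddChar F ℂ := (ZMod.stdAddChar (N := ringChar F)).compAddMonoidHom
    (Algebra.trace (ZMod (ringChar F)) F).toAddMonoidHom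
  have hψ : ∀ x, ψ x = ZMod.stdAddChar (N := ringChar F) (Algebra.trace (ZMod (ringChar F)) F x) := fun x => rfl
  have h1 : ∀ x, ψ (x ^ ringChar F) = ψ x := by
    intro x
    rw [hψ, hψ]
    have := Algebra.trace_eq_of_algEquiv (FiniteField.frobeniusAlgEquivOfAlgebraic (ZMod (ringChar F)) F) x
    rw [FiniteField.coe_frobeniusAlgEquivOfAlgebraic] at this
    simp only [ZMod.card] at this
    rw [this]
  refine ⟨ψ, ?_, ?_⟩
  · intro a ha
    rw [AddChar.ne_one_iff]
    obtain ⟨b, hb⟩ := FiniteField.trace_to_zmod_nondegenerate F (a := a) ha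
    refine ⟨b, ?_⟩
    rw [AddChar.mulShift_apply, hψ]
    intro h
    have h3 : ZMod.stdAddChar (N := ringChar F) (Algebra.trace (ZMod (ringChar F)) F (a * b)) =
       ZMod.stdAddChar (N := ringChar F) 0 := by rw [h, AddChar.map_zero_eq_one]
    have h4 := ZMod.injective_stdAddChar h3
    apply hb
    exact h4
  · induction k with
    | zero => simp
    | succ k ih => intro x; rw [pow_succ, pow_mul, h1, ih]

lemma sum_units {F : Type*} [Field F] [Fintype F] [DecidableEq F] (f : F → ℂ) :
    ∑ x, f x = f 0 + ∑ u : Fˣ, f u := by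
  rw [Fintype.sum_eq_add_sum_subtype_ne f 0]
  congr 1
  exact (Fintype.sum_equiv unitsEquivNeZero _ _ (fun u => rfl)).symm

lemma card_root {F : Type*} [Field F] [Fintype F] [DecidableEq F] (n : ℕ)
    (hn : n ∣ Fintype.card F - 1) : #{u : Fˣ | u ^ n = 1} = n := by
  have h := IsCyclic.card_powMonoidHom_ker (G := Fˣ) n
  rw [Nat.card_eq_fintype_card (α := Fˣ), Fintype.card_units, Nat.gcd_eq_right hn] at h
  conv_rhs => rw [← h]
  rw [← Nat.subtype_card]
  intro x; simp [MonoidHom.mem_ker]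

lemma exists_root {F : Type*} [Field F] [Fintype F] [DecidableEq F] (n k : ℕ)
    (hn : n * k = Fintype.card F - 1) (y : Fˣ) (hy : y ^ n = 1) : ∃ z : Fˣ, z ^ k = y := by
  obtain ⟨g, hg⟩ := IsCyclic.exists_generator (α := Fˣ)
  obtain ⟨i, rfl⟩ := Subgroup.mem_zpowers_iff.1 (hg y)
  have ho : orderOf g = n * k := by
    rw [orderOf_eq_card_of_forall_mem_zpowers hg, Nat.card_eq_fintype_card, Fintype.card_units, hn]
  have hpos : 0 < n * k := by rw [← ho]; exact orderOf_pos g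
  have hn0 : 0 < n := Nat.pos_of_mul_pos_right hpos
  rw [← zpow_natCast, ← zpow_mul, ← orderOf_dvd_iff_zpow_eq_one, ho] at hy
  have : (k : ℤ) ∣ i := by
    push_cast at hy
    rw [mul_comm i] at hy
    exact Int.dvd_of_mul_dvd_mul_left (by omega) hy
  obtain ⟨j, rfl⟩ := this
  exact ⟨g ^ j, by rw [← zpow_natCast, ← zpow_mul, mul_comm]⟩

lemma sum_pow_integral {F : Type*} [Field F] [Fintype F] [DecidableEq F] (n : ℕ)
    (hn : n ∣ Fintype.card F - 1) (f : Fˣ → ℂ) (hf : ∀ u, IsIntegral ℤ (f u)) :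
    ∃ w : ℂ, IsIntegral ℤ w ∧ ∑ u : Fˣ, f (u ^ n) = n * w := by
  refine ⟨∑ v ∈ univ.image (fun u : Fˣ => u ^ n), f v, IsIntegral.sum _ fun _ _ => hf _, ?_⟩
  rw [Finset.sum_comp f (fun u : Fˣ => u ^ n), mul_sum]
  refine sum_congr rfl fun v hv => ?_
  have : #{u : Fˣ | u ^ n = v} = n := by
    have h := MonoidHom.card_fiber_eq_of_mem_range (powMonoidHom n : Fˣ →* Fˣ) (x := v) (y := 1)
      (by simpa using hv) ⟨1, by simp⟩
    simp only [powMonoidHom_apply] at h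
    rw [h, card_root n hn]
  rw [this, nsmul_eq_mul]

lemma char_integral {F : Type*} [Field F] [Fintype F] (ψ : AddChar F ℂ) (x : F) :
    IsIntegral ℤ (ψ x) := by
  refine IsIntegral.of_pow (n := Fintype.card F) Fintype.card_pos ?_
  rw [← AddChar.map_nsmul_eq_pow, card_nsmul_eq_zero, AddChar.map_zero_eq_one]
  exact isIntegral_one

lemma integral_dvd (n : ℕ) (hn : n ≠ 0) (z : ℤ) (w : ℂ) (hw : IsIntegral ℤ w) (h : (z : ℂ) = n * w) :
    (n : ℤ) ∣ z := by
  have hn' : (n : ℂ) ≠ 0 := by exact_mod_cast hn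
  have h1 : w = algebraMap ℚ ℂ ((z : ℚ) / n) := by
    simp; field_simp; rw [h, mul_comm]
  rw [h1, isIntegral_algebraMap_iff (algebraMap ℚ ℂ).injective] at hw
  obtain ⟨y, hy⟩ := IsIntegrallyClosed.isIntegral_iff.1 hw
  refine ⟨y, ?_⟩
  have hn'' : (n : ℚ) ≠ 0 := by exact_mod_cast hn
  simp at hy
  rw [eq_div_iff hn''] at hy
  have : ((z : ℤ) : ℚ) = ((n * y : ℤ) : ℚ) := by push_cast; rw [← hy]; ring
  exact_mod_cast this

noncomputable def S {F : Type*} [Field F] [Fintype F] (ψ : AddChar F ℂ) (m : ℕ) (a : F) : ℂ :=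
  ∑ x, ψ (a * x ^ m)

section
variable {F : Type*} [Field F] [Fintype F] [DecidableEq F] {ψ : AddChar F ℂ}

lemma S_units (m : ℕ) (hm : m ≠ 0) (a : F) : S ψ m a = 1 + ∑ u : Fˣ, ψ (a * (u : F) ^ m) := by
  rw [S, sum_units]; simp [hm]

lemma S_shift (m : ℕ) (a : F) (z : Fˣ) : S ψ m (a * (z : F) ^ m) = S ψ m a := by
  unfold S
  refine Fintype.sum_equiv (Units.mulLeft z) _ _ fun x => ?_
  simp [mul_pow, mul_assoc]

/-- averaging -/
lemma S_avg (m b : ℕ) (hm : m ≠ 0) (hb : b ≠ 0) (t : F) :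
    ∑ u : Fˣ, S ψ (m * b) (t * (u : F) ^ m) = (Fintype.card Fˣ : ℂ) * S ψ m t := by
  have h1 : ∀ u : Fˣ, S ψ (m * b) (t * (u : F) ^ m) =
      1 + ∑ v : Fˣ, ψ (t * ((u * v ^ b : Fˣ) : F) ^ m) := by
    intro u
    rw [S_units _ (by positivity)]
    congr 1
    refine sum_congr rfl fun v _ => ?_
    congr 1; push_cast; ring
  simp_rw [h1]
  rw [sum_add_distrib, sum_comm]
  have h2 : ∀ v : Fˣ, ∑ u : Fˣ, ψ (t * ((u * v ^ b : Fˣ) : F) ^ m) = S ψ m t - 1 := by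
    intro v
    rw [S_units m hm, add_sub_cancel_left]
    exact Fintype.sum_equiv (Equiv.mulRight (v ^ b)) _ _ fun u => rfl
  simp_rw [h2]
  simp

lemma sum_lin (hψ : ψ.IsPrimitive) (Q r : ℕ) (hQr : Fintype.card F = Q ^ (r + 1)) (hQ0 : Q ≠ 0)
    (hadd : ∀ x y : F, (x + y) ^ Q = x ^ Q + y ^ Q)
    (hfrob : ∀ x, ψ (x ^ Q) = ψ x) (c d : F) :
    ∑ y, ψ (c * y ^ Q + d * y) = if c + d ^ Q = 0 then (Fintype.card F : ℂ) else 0 := by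
  have hsur : ∀ x : F, (x ^ (Q ^ r)) ^ Q = x := by
    intro x; rw [← pow_mul, ← pow_succ, ← hQr, FiniteField.pow_card]
  have h1 : ∀ y, ψ (c * y ^ Q + d * y) = ψ (y * (c ^ (Q ^ r) + d)) := by
    intro y
    rw [AddChar.map_add_eq_mul, mul_add, AddChar.map_add_eq_mul, ← hfrob (y * c ^ (Q ^ r)),
      mul_pow y, hsur, mul_comm c, mul_comm d]
  simp_rw [h1]
  rw [AddChar.sum_mulShift _ hψ]
  have h2 : c ^ (Q ^ r) + d = 0 ↔ c + d ^ Q = 0 := by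
    rw [← pow_eq_zero_iff hQ0 (a := c ^ (Q ^ r) + d), hadd, hsur]
  simp only [h2]
  split_ifs <;> simp

lemma S_sq (hψ : ψ.IsPrimitive) (Q r : ℕ) (hQr : Fintype.card F = Q ^ (r + 1)) (hQ0 : Q ≠ 0)
    (hadd : ∀ x y : F, (x + y) ^ Q = x ^ Q + y ^ Q)
    (hfrob : ∀ x, ψ (x ^ Q) = ψ x) (a : F)
    (ha : ∀ δ : F, δ ≠ 0 → a * δ + (a * δ ^ Q) ^ Q ≠ 0) :
    S ψ (Q + 1) a * S ψ (Q + 1) (-a) = Fintype.card F := by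
  unfold S
  rw [sum_mul_sum, sum_comm]
  have h1 : ∀ y : F, ∑ x, ψ (a * x ^ (Q + 1)) * ψ (-a * y ^ (Q + 1)) =
      ∑ δ, ψ (a * δ ^ (Q + 1)) * ψ ((a * δ) * y ^ Q + (a * δ ^ Q) * y) := by
    intro y
    refine (Fintype.sum_equiv (Equiv.addRight y) _ _ fun δ => ?_).symm
    rw [← AddChar.map_add_eq_mul, ← AddChar.map_add_eq_mul]
    congr 1
    simp only [Equiv.coe_addRight, pow_succ, hadd]
    ring
  simp_rw [h1]
  rw [sum_comm]
  simp_rw [← mul_sum, sum_lin hψ Q r hQr hQ0 hadd hfrob]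
  rw [Finset.sum_eq_single 0]
  · simp [hQ0]
  · intro δ _ hδ
    rw [if_neg (ha δ hδ), mul_zero]
  · simp

lemma neg_one_pow_eq (Q s j : ℕ) (hs : s ≠ 0) (hcard : Fintype.card F = Q ^ s)
    (hj : Odd Q → Even j) : (-1 : F) ^ j = 1 := by
  rcases Nat.even_or_odd Q with h | h
  · have h1 := FiniteField.pow_card (-1 : F)
    rw [hcard, Even.neg_one_pow (h.pow_of_ne_zero hs)] at h1
    rw [← h1, one_pow]
  · exact (hj h).neg_one_pow

lemma S_neg (Q s K : ℕ) (hs : s ≠ 0) (hcard : Fintype.card F = Q ^ s)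
    (hK : Fintype.card F - 1 = (Q + 1) * ((Q - 1) * K)) (a : F) :
    S ψ (Q + 1) (-a) = S ψ (Q + 1) a := by
  obtain ⟨z, hz⟩ := exists_root (F := F) ((Q - 1) * K) (Q + 1) (by rw [hK, mul_comm]) (-1) (by
    ext
    push_cast
    refine neg_one_pow_eq Q s _ hs hcard fun h => Even.mul_right (Nat.Odd.sub_odd h odd_one) _)
  rw [← S_shift (Q + 1) a z]
  have : ((z : F)) ^ (Q + 1) = -1 := by
    rw [← Units.val_pow_eq_pow_val, hz]; simp
  rw [this]; simp

lemma S_val (hψ : ψ.IsPrimitive) (Q s K : ℕ) (hQ2 : 2 ≤ Q) (hs : Odd s)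
    (hcard : Fintype.card F = Q ^ (2 * s))
    (hK : Fintype.card F - 1 = (Q + 1) * ((Q - 1) * K))
    (hadd : ∀ x y : F, (x + y) ^ Q = x ^ Q + y ^ Q)
    (hfrob : ∀ x, ψ (x ^ Q) = ψ x) (t : F) (ht0 : t ≠ 0) (ht : t ^ Q = -t) (γ : Fˣ)
    (hγ : γ ^ ((Q - 1) * K) ≠ 1) :
    S ψ (Q + 1) (t * γ) = - (Q : ℂ) ^ s := by
  have hspos := hs.pos
  have hsq : S ψ (Q + 1) (t * γ) * S ψ (Q + 1) (t * γ) = Fintype.card F := by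
    nth_rewrite 2 [← S_neg Q (2 * s) K (by omega) hcard hK]
    refine S_sq hψ Q (2 * s - 1) (by rw [hcard]; congr 1; omega) (by omega) hadd hfrob _ ?_
    intro δ hδ h0
    apply hγ
    have hγQ : ∀ x : F, x ^ Q = x ^ (Q - 1) * x := fun x => by
      rw [← pow_succ]; congr 1; omega
    have h1 : (t * (γ : F) * δ) * (1 - ((γ : F) * δ ^ (Q + 1)) ^ (Q - 1)) = 0 := by
      have h2 : (t * γ * δ ^ Q) ^ Q = - (t * γ * δ) * ((γ : F) * δ ^ (Q + 1)) ^ (Q - 1) := by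
        rw [mul_pow, mul_pow, ht, mul_pow, hγQ γ, hγQ (δ ^ Q), hγQ δ, pow_succ, mul_pow, hγQ δ]
        ring
      rw [h2] at h0
      linear_combination h0
    have h3 : ((γ : F) * δ ^ (Q + 1)) ^ (Q - 1) = 1 := by
      rcases mul_eq_zero.1 h1 with h | h
      · simp [ht0, hδ] at h
      · exact (sub_eq_zero.1 h).symm
    have h4 : ((γ : F) * δ ^ (Q + 1)) ^ ((Q - 1) * K) = 1 := by rw [pow_mul, h3, one_pow]
    rw [mul_pow, ← pow_mul, ← hK, FiniteField.pow_card_sub_one_eq_one δ hδ, mul_one] at h4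
    ext
    push_cast
    exact h4
  have h5 : (S ψ (Q + 1) (t * γ) - (Q : ℂ) ^ s) * (S ψ (Q + 1) (t * γ) + (Q : ℂ) ^ s) = 0 := by
    rw [hcard] at hsq
    push_cast at hsq
    linear_combination hsq
  rcases mul_eq_zero.1 h5 with h | h
  · exfalso
    obtain ⟨w, hw, hw2⟩ := sum_pow_integral (F := F) (Q + 1) ⟨_, hK⟩
      (fun u => ψ (t * γ * (u : F))) (fun u => char_integral ψ _)
    have h6 : S ψ (Q + 1) (t * γ) = 1 + ((Q + 1 : ℕ) : ℂ) * w := by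
      rw [S_units _ (by omega), ← hw2]; simp
    have h7 := integral_dvd (Q + 1) (by omega) ((Q : ℤ) ^ s - 1) w hw (by
      push_cast at h6 ⊢
      linear_combination h6 - h)
    have h8 : ((Q + 1 : ℕ) : ℤ) ∣ (Q : ℤ) ^ s + 1 := by
      have := hs.add_dvd_pow_add_pow (Q : ℤ) 1
      simpa using this
    have h9 := dvd_sub h8 h7
    have h10 : ((Q : ℤ) ^ s + 1) - ((Q : ℤ) ^ s - 1) = 2 := by ring
    rw [h10] at h9
    have := Int.le_of_dvd (by norm_num) h9
    omega
  · exact eq_neg_of_add_eq_zero_left h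

lemma S_rel (hψ : ψ.IsPrimitive) (Q s K : ℕ) (hQ2 : 2 ≤ Q) (hs : Odd s)
    (hcard : Fintype.card F = Q ^ (2 * s))
    (hK : Fintype.card F - 1 = (Q + 1) * ((Q - 1) * K))
    (hadd : ∀ x y : F, (x + y) ^ Q = x ^ Q + y ^ Q)
    (hfrob : ∀ x, ψ (x ^ Q) = ψ x) (t : F) (ht0 : t ≠ 0) (ht : t ^ Q = -t)
    (m b : ℕ) (hmb : m * b = Q + 1) :
    S ψ (Q + 1) t - ((b : ℂ) - 1) * (Q : ℂ) ^ s = b * S ψ m t := by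
  have hm : m ≠ 0 := by rintro rfl; omega
  have hb : b ≠ 0 := by rintro rfl; omega
  have h := S_avg (ψ := ψ) m b hm hb t
  set n := (Q - 1) * K with hn
  have h1 : ∀ u : Fˣ, S ψ (m * b) (t * (u : F) ^ m) =
      - (Q : ℂ) ^ s + if u ^ (m * n) = 1 then (S ψ (Q + 1) t + (Q : ℂ) ^ s) else 0 := by
    intro u
    rw [hmb]
    split_ifs with hu
    · obtain ⟨z, hz⟩ := exists_root (F := F) n (Q + 1) (by rw [hK, mul_comm]) (u ^ m)
        (by rw [← pow_mul, hu])
      rw [← Units.val_pow_eq_pow_val, ← hz, Units.val_pow_eq_pow_val, S_shift]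
      ring
    · rw [add_zero, ← Units.val_pow_eq_pow_val]
      exact S_val hψ Q s K hQ2 hs hcard hK hadd hfrob t ht0 ht _ (by rwa [← pow_mul])
  simp_rw [h1] at h
  have hdvd : m * n ∣ Fintype.card F - 1 := ⟨b, by rw [hK, ← hmb]; ring⟩
  rw [sum_add_distrib, ← sum_filter, sum_const, sum_const, card_root _ hdvd, card_univ,
    Fintype.card_units, hK, ← hmb] at h
  have hpos : 0 < Fintype.card F - 1 := by
    have := Fintype.one_lt_card (α := F); omega
  have hn0 : n ≠ 0 := by
    intro h0
    rw [hK, h0] at hpos; simp at hpos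
  have hmn : ((m * n : ℕ) : ℂ) ≠ 0 := by
    exact_mod_cast mul_ne_zero hm hn0
  apply mul_left_cancel₀ hmn
  simp only [nsmul_eq_mul, hmb] at h
  rw [← hmb] at h
  push_cast at h ⊢
  rw [hmb] at h
  linear_combination h

lemma S_final (hψ : ψ.IsPrimitive) (Q s K : ℕ) (hQ2 : 2 ≤ Q) (hs : Odd s)
    (hcard : Fintype.card F = Q ^ (2 * s))
    (hK : Fintype.card F - 1 = (Q + 1) * ((Q - 1) * K))
    (hadd : ∀ x y : F, (x + y) ^ Q = x ^ Q + y ^ Q)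
    (hfrob : ∀ x, ψ (x ^ Q) = ψ x) (t : F) (ht0 : t ≠ 0) (ht : t ^ Q = -t)
    (m b : ℕ) (hmb : m * b = Q + 1) :
    S ψ m t = ((m : ℂ) - 1) * (Q : ℂ) ^ s := by
  have h1 := S_rel hψ Q s K hQ2 hs hcard hK hadd hfrob t ht0 ht 1 (Q + 1) (by ring)
  have h2 := S_rel hψ Q s K hQ2 hs hcard hK hadd hfrob t ht0 ht m b hmb
  have h3 : S ψ 1 t = 0 := by
    unfold S
    simp_rw [pow_one, mul_comm t]
    rw [AddChar.sum_mulShift _ hψ, if_neg ht0]; simp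
  have hb : (b : ℂ) ≠ 0 := by
    have : b ≠ 0 := by rintro rfl; omega
    exact_mod_cast this
  have hmb' : (m : ℂ) * b = Q + 1 := by exact_mod_cast hmb
  rw [h3] at h1
  push_cast at h1
  apply mul_left_cancel₀ hb
  linear_combination h1 - h2 - (Q : ℂ) ^ s * hmb'

lemma card_t (Q s K : ℕ) (hQ2 : 2 ≤ Q) (hs : s ≠ 0) (hcard : Fintype.card F = Q ^ s)
    (hK : Fintype.card F - 1 = (Q + 1) * ((Q - 1) * K)) :
    #{u : Fˣ | (u : F) + (u : F) ^ Q = 0} = Q - 1 := by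
  obtain ⟨z, hz⟩ := exists_root (F := F) ((Q + 1) * K) (Q - 1) (by rw [hK]; ring) (-1) (by
    ext
    push_cast
    refine neg_one_pow_eq Q s _ hs hcard fun h => Even.mul_right (h.add_odd odd_one) _)
  rw [← card_root (F := F) (Q - 1) ⟨(Q + 1) * K, by rw [hK]; ring⟩]
  have key : ∀ u : Fˣ, (u : F) + (u : F) ^ Q = 0 ↔ u ^ (Q - 1) = -1 := by
    intro u
    have h1 : (u : F) ^ Q = (u : F) ^ (Q - 1) * u := by
      rw [← pow_succ]; congr 1; omega
    rw [h1, Units.ext_iff]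
    push_cast
    have h2 : (u : F) + (u : F) ^ (Q - 1) * u = ((u : F) ^ (Q - 1) - (-1)) * u := by ring
    rw [h2, mul_eq_zero, sub_eq_zero]
    simp
  simp_rw [key]
  refine card_bij (fun u _ => u * z) ?_ ?_ ?_
  · intro u hu
    simp only [mem_filter, mem_univ, true_and] at hu ⊢
    rw [mul_pow, hz, hu]; simp
  · intro u _ v _ h
    exact mul_right_cancel h
  · intro u hu
    simp only [mem_filter, mem_univ, true_and] at hu
    refine ⟨u * z⁻¹, ?_, by simp⟩
    simp [mul_pow, hz, hu]

lemma main (hψ : ψ.IsPrimitive) (Q s K : ℕ) (hQ2 : 2 ≤ Q) (hs : Odd s)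
    (hcard : Fintype.card F = Q ^ (2 * s))
    (hK : Fintype.card F - 1 = (Q + 1) * ((Q - 1) * K))
    (hadd : ∀ x y : F, (x + y) ^ Q = x ^ Q + y ^ Q)
    (hfrob : ∀ x, ψ (x ^ Q) = ψ x)
    (m b : ℕ) (hmb : m * b = Q + 1) :
    #{p : F × F | p.2 ^ m = p.1 ^ Q + p.1} = Q ^ (2 * s) + (m - 1) * (Q - 1) * Q ^ s := by
  have hm : m ≠ 0 := by rintro rfl; omega
  have hspos := hs.pos
  have hq0 : (Fintype.card F : ℂ) ≠ 0 := by
    exact_mod_cast Fintype.card_ne_zero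
  have hneg : ∀ x : F, (-x) ^ Q = - x ^ Q := by
    intro x
    have := hadd x (-x)
    rw [add_neg_cancel, zero_pow (by omega)] at this
    linear_combination -this
  have h1 : (Fintype.card F : ℂ) * #{p : F × F | p.2 ^ m = p.1 ^ Q + p.1} =
      ∑ p : F × F, ∑ t, ψ (t * (p.1 ^ Q + p.1 - p.2 ^ m)) := by
    simp_rw [AddChar.sum_mulShift _ hψ, sub_eq_zero]
    push_cast
    rw [← sum_filter, sum_const, nsmul_eq_mul, mul_comm]
    congr 4
    ext p
    exact eq_comm
  have h2 : ∑ p : F × F, ∑ t, ψ (t * (p.1 ^ Q + p.1 - p.2 ^ m)) =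
      ∑ t, (if t + t ^ Q = 0 then (Fintype.card F : ℂ) else 0) * S ψ m (-t) := by
    rw [sum_comm]
    refine sum_congr rfl fun t _ => ?_
    rw [← sum_lin hψ Q (2 * s - 1) (by rw [hcard]; congr 1; omega) (by omega) hadd hfrob t t, S,
      sum_mul_sum, Fintype.sum_prod_type]
    refine sum_congr rfl fun x _ => sum_congr rfl fun y _ => ?_
    rw [← AddChar.map_add_eq_mul]
    congr 1
    ring
  have h3 : S ψ m (-0) = Fintype.card F := by simp [S]
  have h4 : ∀ u : Fˣ, (if (u : F) + (u : F) ^ Q = 0 then (Fintype.card F : ℂ) else 0) *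
      S ψ m (-u) = if (u : F) + (u : F) ^ Q = 0 then
        (Fintype.card F : ℂ) * (((m : ℂ) - 1) * (Q : ℂ) ^ s) else 0 := by
    intro u
    split_ifs with h
    · rw [S_final hψ Q s K hQ2 hs hcard hK hadd hfrob (-u) (by simp) (by
        rw [hneg]; linear_combination -h) m b hmb]
    · simp
  rw [h2, sum_units] at h1
  simp_rw [h4] at h1
  rw [h3, ← sum_filter, sum_const, card_t Q (2 * s) K hQ2 (by omega) hcard hK, zero_pow (by omega),
    add_zero, if_pos rfl, nsmul_eq_mul] at h1
  have h5 : ((#{p : F × F | p.2 ^ m = p.1 ^ Q + p.1} : ℕ) : ℂ) =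
      ((Q ^ (2 * s) + (m - 1) * (Q - 1) * Q ^ s : ℕ) : ℂ) := by
    apply mul_left_cancel₀ hq0
    rw [h1, ← hcard]
    push_cast [Nat.cast_sub (show 1 ≤ m by omega), Nat.cast_sub (show 1 ≤ Q by omega)]
    ring
  exact_mod_cast h5

end

end Stmt17


/-- Let `Q` be a prime power, `b` a positive divisor of `Q+1`,
`s` an odd positive integer, and `q = Q^(2s)`. Then
`|{(α, β) ∈ F_q × F_q : β^((Q+1)/b) = α^Q + α}| = q + ((Q+1)/b - 1)(Q-1)Q^s`,
i.e. the superelliptic curve `y^((Q+1)/b) = x^Q + x` is maximal over `F_q`. -/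
theorem stmt_17 (Q : ℕ) (hQ : IsPrimePow Q)
    (b : ℕ) (hb : 0 < b) (hbdvd : b ∣ Q + 1)
    (s : ℕ) (hs : 0 < s) (hsodd : Odd s)
    (q : ℕ) (hq : q = Q ^ (2 * s))
    (F : Type*) [Field F] [Fintype F] (hF : Fintype.card F = q) :
    Set.ncard {p : F × F | p.2 ^ ((Q + 1) / b) = p.1 ^ Q + p.1} =
      q + ((Q + 1) / b - 1) * (Q - 1) * Q ^ s := by
  classical
  obtain ⟨p, k, hp, hk, rfl⟩ := (isPrimePow_nat_iff _).1 hQ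
  have : Fact p.Prime := ⟨hp⟩
  have hc : CharP F p := by
    obtain ⟨p', hp'⟩ := CharP.exists F
    obtain ⟨n, hp'', hn⟩ := FiniteField.card F p'
    rw [hF, hq, ← pow_mul] at hn
    have h1 : p' ∣ p ^ (k * (2 * s)) := by rw [hn]; exact dvd_pow_self _ n.ne_zero
    have h2 := (Nat.prime_dvd_prime_iff_eq hp'' hp).1 (hp''.dvd_of_dvd_pow h1)
    rwa [h2] at hp'
  obtain ⟨ψ, hψ, hfrob⟩ := Stmt17.exists_char p k F
  have hQ2 : 2 ≤ p ^ k := hQ.two_le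
  obtain ⟨K, hK⟩ : (p ^ k) ^ 2 - 1 ∣ (p ^ k) ^ (2 * s) - 1 := by
    have := Nat.sub_dvd_pow_sub_pow ((p ^ k) ^ 2) 1 s
    rwa [one_pow, ← pow_mul (p ^ k) 2 s] at this
  have hm := Stmt17.main hψ (p ^ k) s K hQ2 hsodd (by rw [hF, hq])
    (by
      rw [hF, hq, hK, ← mul_assoc]
      congr 1
      exact Nat.sq_sub_sq (p ^ k) 1)
    (fun x y => add_pow_char_pow x y p k) hfrob ((p ^ k + 1) / b) b (Nat.div_mul_cancel hbdvd)
  rw [hq, ← hm, ← Set.ncard_coe_finset]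
  congr 1
  ext x
  simp
end
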